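/- arXiv:2307.14566 — 2 statements merged into one kernel-verified Lean document; each statement's English description precedes it below -/
import Mathlib

section
/- Let p be a positive even integer and let 𝒫 be a principal partition of [p]×[2]×[2]. Then lim_{ℓ→∞} |As(𝒫,=,ℓ)| / ℓ^{3p/2} = (2/3)^{p/2}. -/
/-!
A class of a principal partition has two elements.  Some class meeting equation `e` meets it in an
odd number of indices, hence joins `e` to another equation `e'`; by separability every class
meeting `e` does the same.  So the equations are paired off by a fixed-point-free involution, and
the four variables of `e` are identified with the four variables of `e'` by a bijection.
As `𝒫` is satisfiable, this bijection respects the splitting of the four variables into the two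
sides of the equation: if `a + b = c + d` and also `a + c = b + d`, then `b = c`.  Hence the two
equations of a pair are equivalent, and an assignment for `𝒫` is the same as an *injective*
solution of `k = p / 2` independent equations (`exists_rep`).

One equation has `(2ℓ³ + ℓ) / 3` solutions in `[ℓ]` (`card_sols`), so there are
`((2ℓ³ + ℓ) / 3) ^ k` solutions in all.  A solution failing injectivity satisfies some `τ x = τ y`
with `x ≠ y`; it is then determined by `3k - 1` of its values, so there are `O(ℓ ^ (3k - 1))` of
these (`card_collision_le`), which is negligible (`tendsto_injSols`).
-/

/-- Index set `[p] × [2] × [2]`. -/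
abbrev Idx (p : ℕ) := Fin p × Fin 2 × Fin 2

/-- `β` and `γ` lie in the same class of the partition `Pt`. -/
def SameClass {p : ℕ} (Pt : Finpartition (Finset.univ : Finset (Idx p))) (β γ : Idx p) : Prop :=
  ∃ P ∈ Pt.parts, β ∈ P ∧ γ ∈ P

/-- The system of equations `τ(e,0,0)+τ(e,0,1) = τ(e,1,0)+τ(e,1,1)`. -/
def EqCond {p : ℕ} (τ : Idx p → ℕ) : Prop :=
  ∀ e : Fin p, τ (e, 0, 0) + τ (e, 0, 1) = τ (e, 1, 0) + τ (e, 1, 1)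

/-- `As(Pt,=,ℓ)`. -/
def AsEq {p : ℕ} (Pt : Finpartition (Finset.univ : Finset (Idx p))) (ℓ : ℕ) :
    Set (Idx p → ℕ) :=
  {τ | (∀ i, τ i < ℓ) ∧ EqCond τ ∧ ∀ β γ, τ β = τ γ ↔ SameClass Pt β γ}

/-- `As(⪰Pt,=,ℓ)`. -/
def AsGe {p : ℕ} (Pt : Finpartition (Finset.univ : Finset (Idx p))) (ℓ : ℕ) :
    Set (Idx p → ℕ) :=
  {τ | (∀ i, τ i < ℓ) ∧ EqCond τ ∧ ∀ β γ, SameClass Pt β γ → τ β = τ γ}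

/-- `Pt` is satisfiable. -/
def Satisfiable {p : ℕ} (Pt : Finpartition (Finset.univ : Finset (Idx p))) : Prop :=
  ∃ τ : Idx p → ℕ, EqCond τ ∧ ∀ β γ, τ β = τ γ ↔ SameClass Pt β γ

/-- `Pt` is globally even, locally odd. -/
def GELO {p : ℕ} (Pt : Finpartition (Finset.univ : Finset (Idx p))) : Prop :=
  (∀ P ∈ Pt.parts, Even P.card) ∧
    ∀ e : Fin p, ∃ P ∈ Pt.parts, Odd ((P.filter fun x => x.1 = e).card)

/-- `Pt` is contributory. -/
def Contributory {p : ℕ} (Pt : Finpartition (Finset.univ : Finset (Idx p))) : Prop :=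
  Satisfiable Pt ∧ GELO Pt

/-- The set of equations met by a class. -/
def eqnsOf {p : ℕ} (P : Finset (Idx p)) : Finset (Fin p) := P.image fun x => x.1

/-- `Pt` is separable: any two classes are equation-identical or equation-disjoint. -/
def Separable {p : ℕ} (Pt : Finpartition (Finset.univ : Finset (Idx p))) : Prop :=
  ∀ P ∈ Pt.parts, ∀ Q ∈ Pt.parts, eqnsOf P = eqnsOf Q ∨ Disjoint (eqnsOf P) (eqnsOf Q)

/-- The number of classes of the quotient of `Pt` by equation-identicality. -/
def quotCard {p : ℕ} (Pt : Finpartition (Finset.univ : Finset (Idx p))) : ℕ :=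
  (Pt.parts.image eqnsOf).card

/-- A twin class. -/
def IsTwin {p : ℕ} (P : Finset (Idx p)) : Prop :=
  ∃ e : Fin p, ∃ s : Fin 2, (e, s, 0) ∈ P ∧ (e, s, 1) ∈ P

/-- `Pt` is principal. -/
def Principal {p : ℕ} (Pt : Finpartition (Finset.univ : Finset (Idx p))) : Prop :=
  Contributory Pt ∧ Separable Pt ∧ ∀ P ∈ Pt.parts, P.card = 2

/-- Membership in the group `W^(p)` of symmetries. -/
def InW {p : ℕ} (π : Equiv.Perm (Idx p)) : Prop :=
  ∃ ε : Equiv.Perm (Fin p), ∃ σ : Fin p → Equiv.Perm (Fin 2),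
    ∃ F : Fin p → Fin 2 → Equiv.Perm (Fin 2),
      ∀ (e : Fin p) (s v : Fin 2),
        π (e, s, v) = (ε e, σ (ε e) s, F (ε e) (σ (ε e) s) v)

/-- The restriction of `Pt` to `{e} × [2] × [2]`. -/
def restrictTo {p : ℕ} (Pt : Finpartition (Finset.univ : Finset (Idx p))) (e : Fin p) :
    Finset (Finset (Idx p)) :=
  (Pt.parts.image fun P => P.filter fun x => x.1 = e).filter fun Q => Q.Nonempty

/-- The equation `f(0,0) + f(0,1) = f(1,0) + f(1,1)`. -/
def Sol (f : Fin 2 × Fin 2 → ℕ) : Prop := f (0, 0) + f (0, 1) = f (1, 0) + f (1, 1)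

instance : DecidablePred Sol := fun f => by unfold Sol; infer_instance

/-- The solutions of one equation with all values in `[ℓ]`. -/
def sols (ℓ : ℕ) : Finset (Fin 2 × Fin 2 → ℕ) :=
  (Fintype.piFinset fun _ => Finset.range ℓ).filter Sol

lemma mem_sols {ℓ : ℕ} {f : Fin 2 × Fin 2 → ℕ} : f ∈ sols ℓ ↔ (∀ i, f i < ℓ) ∧ Sol f := by
  simp [sols]

/-! ### Counting the solutions of one equation -/

lemma sum_abs_sub_const (n : ℕ) :
    2 * ∑ a ∈ Finset.range n, |(a : ℤ) - n| = n * (n + 1) := by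
  have h : ∀ a ∈ Finset.range n, |(a : ℤ) - n| = n - a := by
    intro a ha
    rw [Finset.mem_range] at ha
    rw [abs_sub_comm, abs_of_nonneg (by omega)]
  rw [Finset.sum_congr rfl h]
  have h2 : ∀ m : ℕ, 2 * ∑ a ∈ Finset.range m, ((n : ℤ) - a) = 2 * n * m - m * (m - 1) := by
    intro m
    induction m with
    | zero => simp
    | succ m ih =>
      rw [Finset.sum_range_succ, mul_add, ih]
      push_cast
      ring
  rw [h2]
  ring

lemma sum_abs_sub (n : ℕ) :
    3 * ∑ a ∈ Finset.range n, ∑ c ∈ Finset.range n, |(a : ℤ) - c| = (n : ℤ) ^ 3 - n := by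
  induction n with
  | zero => simp
  | succ n ih =>
    have h := sum_abs_sub_const n
    have h' : ∑ c ∈ Finset.range n, |(n : ℤ) - c| = ∑ c ∈ Finset.range n, |(c : ℤ) - n| :=
      Finset.sum_congr rfl fun c _ => abs_sub_comm _ _
    simp only [Finset.sum_range_succ, Finset.sum_add_distrib, h', sub_self, abs_zero]
    push_cast
    linarith

/-- A solution is determined by `a = f(0,0)`, `c = f(1,0)` and `b = f(0,1)`, where `b` ranges over
an interval of `ℓ - |a - c|` integers. -/
lemma card_sols_eq_sum (ℓ : ℕ) : (sols ℓ).card =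
    ∑ a ∈ Finset.range ℓ, ∑ c ∈ Finset.range ℓ, (min ℓ (ℓ + c - a) - (c - a)) := by
  rw [← Finset.sum_product' (f := fun a c => min ℓ (ℓ + c - a) - (c - a))]
  have : (sols ℓ).card = ((Finset.range ℓ ×ˢ Finset.range ℓ).sigma
      fun ac => Finset.Ico (ac.2 - ac.1) (min ℓ (ℓ + ac.2 - ac.1))).card := by
    refine Finset.card_nbij' (fun f => ⟨(f (0, 0), f (1, 0)), f (0, 1)⟩)
      (fun x => fun i => if i = (0, 0) then x.1.1 else if i = (1, 0) then x.1.2 else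
        if i = (0, 1) then x.2 else x.1.1 + x.2 - x.1.2) ?_ ?_ ?_ ?_
    · intro f hf
      obtain ⟨h1, h2⟩ := mem_sols.1 hf
      have := h1 (0, 0); have := h1 (0, 1); have := h1 (1, 0); have := h1 (1, 1)
      unfold Sol at h2
      simp only [Finset.coe_sigma, Set.mem_sigma_iff, Finset.mem_coe, Finset.mem_product,
        Finset.mem_range, Finset.mem_Ico]
      omega
    · rintro ⟨⟨a, c⟩, b⟩ hx
      simp only [Finset.coe_sigma, Set.mem_sigma_iff, Finset.mem_coe, Finset.mem_product,
        Finset.mem_range, Finset.mem_Ico] at hx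
      refine mem_sols.2 ⟨?_, ?_⟩
      · intro i
        dsimp only
        split_ifs <;> omega
      · simp [Sol]
        omega
    · intro f hf
      obtain ⟨h1, h2⟩ := mem_sols.1 hf
      unfold Sol at h2
      funext ⟨i, j⟩
      fin_cases i <;> fin_cases j <;> simp
      omega
    · rintro ⟨⟨a, c⟩, b⟩ hx
      simp
  rw [this, Finset.card_sigma]
  simp

lemma card_sols (ℓ : ℕ) : 3 * ((sols ℓ).card : ℤ) = 2 * (ℓ : ℤ) ^ 3 + ℓ := by
  have h : ((sols ℓ).card : ℤ) =
      ∑ a ∈ Finset.range ℓ, ∑ c ∈ Finset.range ℓ, ((ℓ : ℤ) - |(a : ℤ) - c|) := by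
    rw [card_sols_eq_sum]
    push_cast [-Nat.cast_min, -Nat.cast_sub]
    refine Finset.sum_congr rfl fun a ha => Finset.sum_congr rfl fun c hc => ?_
    rw [Finset.mem_range] at ha hc
    rcases abs_cases ((a : ℤ) - c) with ⟨h, _⟩ | ⟨h, _⟩ <;> rw [h] <;> omega
  rw [h]
  simp only [Finset.sum_sub_distrib, Finset.sum_const, Finset.card_range, nsmul_eq_mul]
  have := sum_abs_sub ℓ
  linarith

/-! ### Injective solutions of independent equations -/

section Independent

variable {ι : Type*} [Fintype ι] [DecidableEq ι]

/-- Solutions with values in `[ℓ]` of a family of independent equations indexed by `ι`. -/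
def famSols (ι : Type*) [Fintype ι] [DecidableEq ι] (ℓ : ℕ) : Finset (ι → Fin 2 × Fin 2 → ℕ) :=
  Fintype.piFinset fun _ => sols ℓ

/-- Members of `famSols` all of whose values are distinct. -/
noncomputable def injSols (ι : Type*) [Fintype ι] [DecidableEq ι] (ℓ : ℕ) :
    Finset (ι → Fin 2 × Fin 2 → ℕ) :=
  open Classical in
  (famSols ι ℓ).filter fun σ => Function.Injective fun x : ι × Fin 2 × Fin 2 => σ x.1 x.2

lemma Sol.eq_of_eq_off {f g : Fin 2 × Fin 2 → ℕ} (hf : Sol f) (hg : Sol g) (o : Fin 2 × Fin 2)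
    (h : ∀ w, w ≠ o → f w = g w) : f = g := by
  unfold Sol at hf hg
  have key : f o = g o := by
    have h00 := h (0, 0); have h01 := h (0, 1); have h10 := h (1, 0); have h11 := h (1, 1)
    obtain ⟨i, j⟩ := o
    fin_cases i <;> fin_cases j <;> simp at h00 h01 h10 h11 ⊢ <;> omega
  funext w
  by_cases hw : w = o
  · rw [hw, key]
  · exact h w hw

/-- A solution with `σ x = σ y` is determined by its values away from `x` and from one further
variable, different from `x` and `y`, in each equation. -/
lemma card_collision_le (ℓ : ℕ) (x y : ι × Fin 2 × Fin 2) (hxy : x ≠ y) :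
    ((famSols ι ℓ).filter fun σ => σ x.1 x.2 = σ y.1 y.2).card ≤
      ℓ ^ (3 * Fintype.card ι - 1) := by
  have ho : ∀ e : ι, ∃ o : Fin 2 × Fin 2, (e, o) ≠ x ∧ (e, o) ≠ y := by
    intro e
    have h : ∀ u v : Fin 2 × Fin 2, ∃ o, o ≠ u ∧ o ≠ v := by decide
    obtain ⟨o, h1, h2⟩ := h x.2 y.2
    exact ⟨o, fun h => h1 (by rw [← h]), fun h => h2 (by rw [← h])⟩
  choose o hox hoy using ho
  let B : Finset (ι × Fin 2 × Fin 2) := insert x (Finset.univ.image fun e => (e, o e))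
  have hB : B.card = Fintype.card ι + 1 := by
    rw [Finset.card_insert_of_notMem, Finset.card_image_of_injective, Finset.card_univ]
    · intro a b h
      exact congrArg Prod.fst h
    · simp only [Finset.mem_image, Finset.mem_univ, true_and, not_exists]
      exact hox
  have hS : (Finset.univ \ B).card = 3 * Fintype.card ι - 1 := by
    rw [Finset.card_sdiff_of_subset (Finset.subset_univ _), hB, Finset.card_univ]
    simp only [Fintype.card_prod, Fintype.card_fin]
    omega
  have hmem : ∀ z, z ∈ Finset.univ \ B ↔ z ≠ x ∧ z.2 ≠ o z.1 := by
    intro z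
    simp only [B, Finset.mem_sdiff, Finset.mem_univ, true_and, Finset.mem_insert,
      Finset.mem_image, not_or, not_exists, and_congr_right_iff]
    intro _
    constructor
    · intro h h'
      exact h z.1 (by rw [← h'])
    · rintro h e rfl
      exact h rfl
  have hT : (Fintype.piFinset fun _ : ↥(Finset.univ \ B) => Finset.range ℓ).card =
      ℓ ^ (3 * Fintype.card ι - 1) := by
    rw [Fintype.card_piFinset, Finset.prod_const, Finset.card_range, Finset.card_univ,
      Fintype.card_coe, hS]
  rw [← hT]
  refine Finset.card_le_card_of_injOn (fun σ z => σ z.1.1 z.1.2) ?_ ?_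
  · intro σ hσ
    simp only [Finset.coe_filter, Set.mem_ofPred_eq, famSols, Fintype.mem_piFinset] at hσ
    simp only [Finset.mem_coe, Fintype.mem_piFinset, Finset.mem_range]
    intro z
    exact (mem_sols.1 (hσ.1 _)).1 _
  · intro σ hσ σ' hσ' h
    simp only [Finset.coe_filter, Set.mem_ofPred_eq, famSols, Fintype.mem_piFinset] at hσ hσ'
    have h1 : ∀ z : ι × Fin 2 × Fin 2, z ≠ x → z.2 ≠ o z.1 → σ z.1 z.2 = σ' z.1 z.2 :=
      fun z hz hz' => congrFun h ⟨z, (hmem z).2 ⟨hz, hz'⟩⟩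
    have hx : σ x.1 x.2 = σ' x.1 x.2 := by
      rw [hσ.2, hσ'.2]
      refine h1 y (Ne.symm hxy) fun h' => hoy y.1 ?_
      rw [← h']
    funext e
    refine Sol.eq_of_eq_off (mem_sols.1 (hσ.1 e)).2 (mem_sols.1 (hσ'.1 e)).2 (o e) ?_
    intro w hw
    by_cases hwx : (e, w) = x
    · rw [← hwx] at hx
      exact hx
    · exact h1 (e, w) hwx hw

lemma card_famSols_le (ℓ : ℕ) : (sols ℓ).card ^ Fintype.card ι ≤
    (injSols ι ℓ).card + (4 * Fintype.card ι) ^ 2 * ℓ ^ (3 * Fintype.card ι - 1) := by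
  classical
  have h : (famSols ι ℓ).card = (sols ℓ).card ^ Fintype.card ι := by
    simp [famSols]
  rw [← h]
  let bad : (ι × Fin 2 × Fin 2) × (ι × Fin 2 × Fin 2) → Finset (ι → Fin 2 × Fin 2 → ℕ) :=
    fun q => (famSols ι ℓ).filter fun σ => σ q.1.1 q.1.2 = σ q.2.1 q.2.2
  have hsub : famSols ι ℓ ⊆ injSols ι ℓ ∪
      (Finset.univ.filter fun q : (ι × Fin 2 × Fin 2) × (ι × Fin 2 × Fin 2) =>
        q.1 ≠ q.2).biUnion bad := by
    intro σ hσ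
    by_cases hi : Function.Injective fun x : ι × Fin 2 × Fin 2 => σ x.1 x.2
    · exact Finset.mem_union_left _ (Finset.mem_filter.2 ⟨hσ, hi⟩)
    · simp only [Function.Injective, not_forall] at hi
      obtain ⟨x, y, hxy, hne⟩ := hi
      refine Finset.mem_union_right _ (Finset.mem_biUnion.2 ⟨(x, y), ?_, ?_⟩)
      · simpa using hne
      · exact Finset.mem_filter.2 ⟨hσ, hxy⟩
  refine (Finset.card_le_card hsub).trans ((Finset.card_union_le _ _).trans ?_)
  gcongr
  refine (Finset.card_biUnion_le_card_mul _ _ (ℓ ^ (3 * Fintype.card ι - 1)) ?_).trans ?_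
  · rintro ⟨x, y⟩ hq
    exact card_collision_le ℓ x y (by simpa using hq)
  · gcongr
    refine (Finset.card_le_univ _).trans (le_of_eq ?_)
    simp only [Fintype.card_prod, Fintype.card_fin]
    ring

lemma card_injSols_le (ℓ : ℕ) : (injSols ι ℓ).card ≤ (sols ℓ).card ^ Fintype.card ι := by
  classical
  have h : (famSols ι ℓ).card = (sols ℓ).card ^ Fintype.card ι := by
    simp [famSols]
  rw [← h]
  exact Finset.card_filter_le _ _

open Filter in
lemma tendsto_sols : Tendsto (fun ℓ : ℕ => ((sols ℓ).card : ℝ) / (ℓ : ℝ) ^ 3) atTop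
    (nhds (2 / 3)) := by
  have h0 : Tendsto (fun ℓ : ℕ => (2 / 3 : ℝ) + 1 / 3 * ((ℓ : ℝ)⁻¹) ^ 2) atTop
      (nhds (2 / 3 + 1 / 3 * 0 ^ 2)) :=
    ((tendsto_inv_atTop_nhds_zero_nat (𝕜 := ℝ)).pow 2).const_mul _ |>.const_add _
  norm_num at h0
  refine h0.congr' ?_
  filter_upwards [eventually_gt_atTop 0] with ℓ hℓ
  have hℓ' : (ℓ : ℝ) ≠ 0 := by positivity
  have h : 3 * ((sols ℓ).card : ℝ) = 2 * (ℓ : ℝ) ^ 3 + ℓ := by exact_mod_cast card_sols ℓ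
  field_simp
  linarith

open Filter in
lemma tendsto_injSols (hι : 0 < Fintype.card ι) :
    Tendsto (fun ℓ : ℕ => ((injSols ι ℓ).card : ℝ) / (ℓ : ℝ) ^ (3 * Fintype.card ι)) atTop
      (nhds ((2 / 3 : ℝ) ^ Fintype.card ι)) := by
  set k := Fintype.card ι with hk
  have hup := (tendsto_sols).pow k
  have hlow : Tendsto (fun ℓ : ℕ => (((sols ℓ).card : ℝ) / (ℓ : ℝ) ^ 3) ^ k -
      ((4 * k : ℝ) ^ 2) * (ℓ : ℝ)⁻¹) atTop (nhds ((2 / 3 : ℝ) ^ k - (4 * k : ℝ) ^ 2 * 0)) :=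
    hup.sub ((tendsto_inv_atTop_nhds_zero_nat (𝕜 := ℝ)).const_mul _)
  rw [mul_zero, sub_zero] at hlow
  refine tendsto_of_tendsto_of_tendsto_of_le_of_le' hlow hup ?_ ?_
  · filter_upwards [eventually_gt_atTop 0] with ℓ hℓ
    have hℓ' : (0 : ℝ) < ℓ := by positivity
    have h : ((sols ℓ).card : ℝ) ^ k ≤
        (injSols ι ℓ).card + (4 * k : ℝ) ^ 2 * (ℓ : ℝ) ^ (3 * k - 1) := by
      exact_mod_cast card_famSols_le (ι := ι) ℓ
    have hpow : (ℓ : ℝ) ^ (3 * k) = (ℓ : ℝ) ^ (3 * k - 1) * ℓ := by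
      rw [← pow_succ]
      congr 1
      omega
    rw [div_pow, ← pow_mul, sub_le_iff_le_add, div_le_iff₀ (by positivity), add_mul,
      div_mul_cancel₀ _ (by positivity), hpow]
    refine h.trans (le_of_eq ?_)
    field_simp
  · filter_upwards with ℓ
    rw [div_pow, ← pow_mul]
    gcongr
    exact_mod_cast card_injSols_le (ι := ι) ℓ

end Independent

/-! ### Structure of principal partitions -/

section Structure

variable {p : ℕ} {Pt : Finpartition (Finset.univ : Finset (Idx p))}

/-- The class of `x` is a pair `{x, μ x}`. -/
lemma exists_partner (h2 : ∀ P ∈ Pt.parts, P.card = 2) :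
    ∃ μ : Idx p → Idx p, ∀ x, μ x ≠ x ∧ ({x, μ x} : Finset (Idx p)) ∈ Pt.parts := by
  have : ∀ x : Idx p, ∃ y, y ≠ x ∧ ({x, y} : Finset (Idx p)) ∈ Pt.parts := by
    intro x
    obtain ⟨P, hP, hx⟩ := Pt.exists_mem (Finset.mem_univ x)
    obtain ⟨a, b, hab, rfl⟩ := Finset.card_eq_two.1 (h2 P hP)
    rcases Finset.mem_insert.1 hx with rfl | hx
    · exact ⟨b, hab.symm, hP⟩
    · rw [Finset.mem_singleton] at hx
      subst hx
      exact ⟨a, hab, by rwa [Finset.pair_comm]⟩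
  choose μ hμ using this
  exact ⟨μ, hμ⟩

lemma sameClass_iff {μ : Idx p → Idx p}
    (hμ : ∀ x, μ x ≠ x ∧ ({x, μ x} : Finset (Idx p)) ∈ Pt.parts) (x y : Idx p) :
    SameClass Pt x y ↔ y = x ∨ y = μ x := by
  constructor
  · rintro ⟨P, hP, hx, hy⟩
    have := Pt.eq_of_mem_parts hP (hμ x).2 hx (Finset.mem_insert_self _ _)
    subst this
    simpa using hy
  · intro h
    exact ⟨_, (hμ x).2, by simp, by simpa using h⟩

lemma partner_involutive {μ : Idx p → Idx p}
    (hμ : ∀ x, μ x ≠ x ∧ ({x, μ x} : Finset (Idx p)) ∈ Pt.parts) (x : Idx p) : μ (μ x) = x := by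
  have h : SameClass Pt (μ x) x := ⟨_, (hμ x).2, by simp, by simp⟩
  rcases (sameClass_iff hμ _ _).1 h with h | h
  · exact absurd h.symm (hμ x).1
  · exact h.symm

/-- The partner of a variable lies in an equation depending only on the equation of the variable,
and different from it. -/
lemma exists_eqn_partner {μ : Idx p → Idx p}
    (hμ : ∀ x, μ x ≠ x ∧ ({x, μ x} : Finset (Idx p)) ∈ Pt.parts)
    (hodd : ∀ e : Fin p, ∃ P ∈ Pt.parts, Odd ((P.filter fun x => x.1 = e).card))
    (hsep : Separable Pt) :
    ∃ m : Fin p → Fin p, (∀ e, m e ≠ e) ∧ ∀ x, (μ x).1 = m x.1 := by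
  have : ∀ e : Fin p, ∃ e', e' ≠ e ∧ ∀ v, (μ (e, v)).1 = e' := by
    intro e
    obtain ⟨P, hP, hPo⟩ := hodd e
    obtain ⟨x, hx⟩ := Finset.card_pos.1 hPo.pos
    rw [Finset.mem_filter] at hx
    obtain ⟨hxP, rfl⟩ := hx
    have hPx := Pt.eq_of_mem_parts hP (hμ x).2 hxP (Finset.mem_insert_self _ _)
    subst hPx
    have hne : (μ x).1 ≠ x.1 := by
      intro h
      rw [Finset.filter_true_of_mem (by simp [h]), Finset.card_pair (hμ x).1.symm] at hPo
      exact absurd hPo (by decide)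
    refine ⟨(μ x).1, hne, fun v => ?_⟩
    rcases hsep _ hP _ (hμ (x.1, v)).2 with h | h
    · have h1 : (μ x).1 ∈ eqnsOf {x, μ x} := by simp [eqnsOf]
      rw [h] at h1
      simp only [eqnsOf, Finset.image_insert, Finset.image_singleton, Finset.mem_insert,
        Finset.mem_singleton] at h1
      rcases h1 with h1 | h1
      · exact absurd h1 hne
      · exact h1.symm
    · have h1 : x.1 ∈ eqnsOf {x, μ x} := by simp [eqnsOf]
      have h3 : x.1 ∈ eqnsOf {(x.1, v), μ (x.1, v)} := by simp [eqnsOf]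
      exact absurd h3 (Finset.disjoint_left.1 h h1)
  choose m hm using this
  exact ⟨m, fun e => (hm e).1, fun x => (hm x.1).2 x.2⟩

/-- A rearrangement of the variables that keeps one injective solution a solution respects the two
sides of the equation, so it keeps every solution a solution. -/
lemma Sol.comp_of_injective {f g : Fin 2 × Fin 2 → ℕ} {ρ : Fin 2 × Fin 2 → Fin 2 × Fin 2}
    (hρ : Function.Injective ρ) (hf : Sol f) (hfi : Function.Injective f) (hfρ : Sol (f ∘ ρ))
    (hg : Sol g) : Sol (g ∘ ρ) := by
  unfold Sol at *
  simp only [Function.comp] at *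
  have n1 : f (0, 0) ≠ f (1, 0) := fun h => absurd (hfi h) (by decide)
  have n2 : f (0, 0) ≠ f (1, 1) := fun h => absurd (hfi h) (by decide)
  have n3 : f (0, 1) ≠ f (1, 0) := fun h => absurd (hfi h) (by decide)
  have n4 : f (0, 1) ≠ f (1, 1) := fun h => absurd (hfi h) (by decide)
  have r1 : ρ (0, 0) ≠ ρ (0, 1) := fun h => absurd (hρ h) (by decide)
  have r2 : ρ (0, 0) ≠ ρ (1, 0) := fun h => absurd (hρ h) (by decide)
  have r3 : ρ (0, 0) ≠ ρ (1, 1) := fun h => absurd (hρ h) (by decide)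
  have r4 : ρ (0, 1) ≠ ρ (1, 0) := fun h => absurd (hρ h) (by decide)
  have r5 : ρ (0, 1) ≠ ρ (1, 1) := fun h => absurd (hρ h) (by decide)
  have r6 : ρ (1, 0) ≠ ρ (1, 1) := fun h => absurd (hρ h) (by decide)
  have cases4 : ∀ w : Fin 2 × Fin 2, w = (0, 0) ∨ w = (0, 1) ∨ w = (1, 0) ∨ w = (1, 1) := by
    decide
  generalize ρ (0, 0) = a at *
  generalize ρ (0, 1) = b at *
  generalize ρ (1, 0) = c at *
  generalize ρ (1, 1) = d at *
  rcases cases4 a with rfl | rfl | rfl | rfl <;> rcases cases4 b with rfl | rfl | rfl | rfl <;>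
  first
  | exact absurd rfl r1
  | (rcases cases4 c with rfl | rfl | rfl | rfl <;>
      first
      | exact absurd rfl r2
      | exact absurd rfl r4
      | (rcases cases4 d with rfl | rfl | rfl | rfl <;>
          first
          | exact absurd rfl r3
          | exact absurd rfl r5
          | exact absurd rfl r6
          | omega))

lemma card_lt_involution {m : Fin p → Fin p} (hm : ∀ e, m e ≠ e) (hmm : ∀ e, m (m e) = e) :
    2 * Fintype.card {e : Fin p // e < m e} = p := by
  have h : Fintype.card {e : Fin p // e < m e} = Fintype.card {e : Fin p // ¬ e < m e} := by
    refine Fintype.card_congr ⟨fun e => ⟨m e.1, ?_⟩, fun e => ⟨m e.1, ?_⟩, ?_, ?_⟩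
    · rw [hmm]
      exact not_lt.2 e.2.le
    · rw [hmm]
      exact lt_of_le_of_ne (not_lt.1 e.2) (hm _)
    · intro e
      simp [hmm]
    · intro e
      simp [hmm]
  have h2 := Fintype.card_subtype_compl fun e : Fin p => e < m e
  have h3 := Fintype.card_subtype_le fun e : Fin p => e < m e
  rw [Fintype.card_fin] at h2 h3
  omega

/-- Keeping the smaller equation of each pair, the classes of a principal partition are the fibres
of a map `rep` onto the variables of `p / 2` independent equations, and injective solutions of
these correspond to assignments for the partition. -/
lemma exists_rep (hprin : Principal Pt) :
    ∃ R : Fin p → Prop, ∃ _ : DecidablePred R, 2 * Fintype.card {e // R e} = p ∧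
      ∃ rep : Idx p → {e // R e} × Fin 2 × Fin 2,
        (∀ x y, SameClass Pt x y ↔ rep x = rep y) ∧
        (∀ (e : {e // R e}) v, rep (e.1, v) = (e, v)) ∧
        ∀ σ : {e // R e} → Fin 2 × Fin 2 → ℕ, (∀ e, Sol (σ e)) →
          EqCond fun x => σ (rep x).1 (rep x).2 := by
  obtain ⟨⟨⟨τ, hτ, hτP⟩, -, hodd⟩, hsep, h2⟩ := hprin
  obtain ⟨μ, hμ⟩ := exists_partner h2
  have hinv := partner_involutive hμ
  obtain ⟨m, hm, hμm⟩ := exists_eqn_partner hμ hodd hsep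
  have hmm : ∀ e, m (m e) = e := by
    intro e
    have h := hμm (μ (e, 0, 0))
    rw [hinv, hμm] at h
    exact h.symm
  have hlt : ∀ x : Idx p, ¬ x.1 < m x.1 → (μ x).1 < m (μ x).1 := by
    intro x hx
    rw [hμm, hmm]
    exact lt_of_le_of_ne (not_lt.1 hx) (hm _)
  let rep : Idx p → {e // e < m e} × Fin 2 × Fin 2 := fun x =>
    if h : x.1 < m x.1 then (⟨x.1, h⟩, x.2) else (⟨(μ x).1, hlt x h⟩, (μ x).2)
  have hrep : ∀ x, ((rep x).1.1, (rep x).2) = if x.1 < m x.1 then x else μ x := by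
    intro x
    by_cases h : x.1 < m x.1 <;> simp [rep, h]
  have hext : ∀ x y, rep x = rep y ↔
      (if x.1 < m x.1 then x else μ x) = if y.1 < m y.1 then y else μ y := by
    intro x y
    rw [← hrep, ← hrep, Prod.ext_iff (x := rep x), Subtype.ext_iff]
    exact (Prod.ext_iff (x := ((rep x).1.1, (rep x).2))
      (y := ((rep y).1.1, (rep y).2))).symm
  have hrep0 : ∀ (e : {e // e < m e}) v, rep (e.1, v) = (e, v) := by
    intro e v
    simp [rep, e.2]
  refine ⟨fun e => e < m e, inferInstance, card_lt_involution hm hmm, rep, ?_, hrep0, ?_⟩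
  · intro x y
    rw [sameClass_iff hμ, hext]
    constructor
    · rintro (rfl | rfl)
      · rfl
      · by_cases hx : x.1 < m x.1
        · have : ¬ (μ x).1 < m (μ x).1 := by
            rw [hμm, hmm]
            exact not_lt.2 hx.le
          rw [if_pos hx, if_neg this, hinv]
        · rw [if_neg hx, if_pos (hlt x hx)]
    · intro h
      split_ifs at h with h1 h3 h3
      · exact Or.inl h.symm
      · exact Or.inr (by rw [h, hinv])
      · exact Or.inr h.symm
      · refine Or.inl ?_
        rw [← hinv y, ← h, hinv]
  · intro σ hσ e
    by_cases he : e < m e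
    · have h := hσ ⟨e, he⟩
      have h' : ∀ v, rep (e, v) = (⟨e, he⟩, v) := hrep0 ⟨e, he⟩
      simpa only [h', Sol] using h
    · have hme : m e < m (m e) := by
        rw [hmm]
        exact lt_of_le_of_ne (not_lt.1 he) (hm _)
      have h' : ∀ v, rep (e, v) = (⟨m e, hme⟩, (μ (e, v)).2) := by
        intro v
        simp [rep, he, hμm]
      have hμe : ∀ v, μ (e, v) = (m e, (μ (e, v)).2) := fun v => Prod.ext (hμm _) rfl
      -- The identification of the variables of `e` with those of `m e`, tested against the
      -- satisfying assignment `τ`.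
      have key : Sol (σ ⟨m e, hme⟩ ∘ fun v => (μ (e, v)).2) := by
        refine Sol.comp_of_injective (f := fun v => τ (m e, v)) ?_ (hτ (m e)) ?_ ?_ (hσ _)
        · intro v w hvw
          have hvw' : (μ (e, v)).2 = (μ (e, w)).2 := hvw
          have : μ (e, v) = μ (e, w) := by rw [hμe v, hμe w, hvw']
          have := congrArg μ this
          rw [hinv, hinv] at this
          exact congrArg Prod.snd this
        · intro v w hvw
          rcases (sameClass_iff hμ _ _).1 ((hτP _ _).1 hvw) with h | h
          · exact (congrArg Prod.snd h).symm
          · have h3 := hμm (m e, v)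
            rw [← h] at h3
            exact absurd h3.symm (hm _)
        · have h4 : ∀ v, τ (m e, (μ (e, v)).2) = τ (e, v) := by
            intro v
            rw [← hμe v, eq_comm, hτP, sameClass_iff hμ]
            exact Or.inr rfl
          have h5 := hτ e
          simpa only [Sol, Function.comp, h4] using h5
      simpa only [h', Sol, Function.comp] using key

/-- Assignments for a principal partition are counted by injective solutions of independent
equations. -/
lemma ncard_asEq_eq {R : Fin p → Prop} [DecidablePred R]
    {rep : Idx p → {e // R e} × Fin 2 × Fin 2}
    (hcl : ∀ x y, SameClass Pt x y ↔ rep x = rep y)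
    (hrep : ∀ (e : {e // R e}) v, rep (e.1, v) = (e, v))
    (hsol : ∀ σ : {e // R e} → Fin 2 × Fin 2 → ℕ, (∀ e, Sol (σ e)) →
      EqCond fun x => σ (rep x).1 (rep x).2) (ℓ : ℕ) :
    (AsEq Pt ℓ).ncard = (injSols {e // R e} ℓ).card := by
  have himg : AsEq Pt ℓ = (fun σ : {e // R e} → Fin 2 × Fin 2 → ℕ =>
      fun x => σ (rep x).1 (rep x).2) '' (injSols {e // R e} ℓ : Set _) := by
    ext τ
    simp only [Set.mem_image, Finset.mem_coe, injSols, famSols, Finset.mem_filter,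
      Fintype.mem_piFinset, mem_sols]
    constructor
    · rintro ⟨h1, h2, h3⟩
      refine ⟨fun e v => τ (e.1, v), ⟨fun e => ⟨fun v => h1 _, h2 e.1⟩, ?_⟩, ?_⟩
      · rintro ⟨e, v⟩ ⟨e', v'⟩ h
        have h4 := (hcl _ _).1 ((h3 _ _).1 h)
        rwa [hrep, hrep] at h4
      · funext x
        rw [h3, hcl]
        exact hrep _ _
    · rintro ⟨σ, ⟨h1, h2⟩, rfl⟩
      refine ⟨fun i => (h1 _).1 _, hsol σ fun e => (h1 e).2, fun x y => ?_⟩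
      rw [hcl]
      exact ⟨fun h => h2 h, fun h => by simp only [h]⟩
  rw [himg, Set.ncard_image_of_injective, Set.ncard_coe_finset]
  intro σ σ' h
  funext e v
  have h5 := congrFun h (e.1, v)
  simpa only [hrep] using h5

end Structure

open Filter in
/-- For a principal partition `𝒫` (with `p` positive and even),
`|As(𝒫,=,ℓ)| / ℓ^(3p/2) → (2/3)^(p/2)` as `ℓ → ∞`. -/
theorem asEq_card_of_principal_asymptotic {p : ℕ} (hp : 0 < p) (he : Even p)
    (Pt : Finpartition (Finset.univ : Finset (Idx p)))
    (hprin : Principal Pt) :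
    Tendsto (fun ℓ : ℕ => ((AsEq Pt ℓ).ncard : ℝ) / (ℓ : ℝ) ^ (3 * p / 2))
      atTop (nhds (((2 : ℝ) / 3) ^ (p / 2))) := by
  obtain ⟨R, hR, hcard, rep, hcl, hrep, hsol⟩ := exists_rep hprin
  have h1 : p / 2 = Fintype.card {e // R e} := by omega
  have h2 : 3 * p / 2 = 3 * Fintype.card {e // R e} := by omega
  simp only [h1, h2, ncard_asEq_eq hcl hrep hsol]
  exact tendsto_injSols (by omega)
end

section
/- Let p ∈ ℕ. Then lim_{ℓ→∞} μ_{p,ℓ}[ssac] / ℓ^{3p/2} equals 0 if p is odd, and equals (p-1)!! · (16/3)^{p/2} if p is even. Equivalently, lim_{ℓ→∞} ℓ^{p/2} · μ_{p,ℓ}[ADF] equals 0 if p is odd and (p-1)!! · (16/3)^{p/2} if p is even. -/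
/-!
Write a uniformly random sequence as a vector of independent signs `x_j` and expand `ssac` in Walsh
characters. The autocorrelation at shift `s > 0` is `∑ x_j x_{j+s}`; squaring it and summing over
`s` leaves (`ssac_eq`)
`ssac = (2 ℓ ^ 2 - ℓ) + 8 T + 4 R`,
where `T` is the sum of the characters of the four-element sets `{j, j + s, j + u, j + s + u}`,
`1 ≤ s < u`, each such set occurring once, and `R` is the sum of the `O(ℓ ^ 2)` characters
`x_j x_{j+2*s}`. There are `ℓ ^ 3 / 12 + O(ℓ ^ 2)` sets of the first kind (`Quads_card_asymp`), so
`T` has variance about `ℓ ^ 3 / 12`, while `R` has variance `O(ℓ ^ 2)`. It remains to show that the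
moments of `T / ℓ ^ (3 / 2)` converge to those of a centred Gaussian of variance `1 / 12`: then those
of `8 T / ℓ ^ (3 / 2)` converge to the Gaussian moments of variance `64 / 12 = 16 / 3`, and `R` does
not contribute.

The moments of `T` are computed by a form of Gaussian integration by parts (`moment_rec`). Let `T_i`
be the part of `T` odd in `x_i`, so that `∑ T_i = 4 T`. Changing the sign of `x_i` turns `T_i` into
`-T_i` and `T` into `T - 2 T_i`, whence
`E[T_i T ^ (p + 1)] = (1 / 2) E[T_i (T ^ (p + 1) - (T - 2 T_i) ^ (p + 1))]`,
which to first order is `(p + 1) E[T_i ^ 2 T ^ p]`. Summing over `i` gives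
`4 E[T ^ (p + 2)] ≈ (p + 1) E[(∑ T_i ^ 2) T ^ p]`. The carré du champ `∑ T_i ^ 2` has mean four times
the number of sets, and its variance is `O(ℓ ^ 5)`, of smaller order than the square `ℓ ^ 6` of the
mean (`var_TI_sq`). This last bound is a count: `T_i ^ 2` is a sum of characters of symmetric
differences of two sets through `i`, and one has to bound the number of coincidences among these
symmetric differences (`Pairs_energy`). Since each set satisfies one linear relation (two of its
elements have the same sum as the other two), fixing `m ≤ 3` of its elements leaves at most
`O(ℓ ^ (3 - m))` choices, and this suffices. So the normalized moments satisfy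
`m_{p+2} = (p + 1) m_p / 12 + o(1)`, the recursion of the Gaussian moments, with `m_0 = 1` and
`m_1 = 0`.

All error terms are controlled by hypercontractivity: for polynomials of bounded degree in the signs,
every absolute moment is bounded in terms of the second one (`moment_bound`, by iterating the
fourth-moment inequality `bonami`).

The demerit factor equals `ssac / ℓ ^ 2 - 1`, so its central moments are those of `ssac` divided by
`ℓ ^ (2 p)`.
-/

open Finset Filter

noncomputable section

/-- The binary sequence of length `ℓ` determined by sign choices `ε`. -/
def seqOf (ℓ : ℕ) (ε : Fin ℓ → Bool) : ℤ → ℤ := fun j =>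
  if h : 0 ≤ j ∧ j < (ℓ : ℤ) then (if ε ⟨j.toNat, by omega⟩ then 1 else -1) else 0

/-- Aperiodic autocorrelation of `f` at shift `s`. -/
def autocorr (f : ℤ → ℤ) (s : ℤ) : ℤ := ∑ᶠ j : ℤ, f (j + s) * f j

/-- The sum of squares of all aperiodic autocorrelations. -/
def ssac (f : ℤ → ℤ) : ℝ := ∑ᶠ s : ℤ, ((autocorr f s : ℝ)) ^ 2

/-- The demerit factor of `f`. -/
def ADF (f : ℤ → ℤ) : ℝ :=
  (∑ᶠ s ∈ {s : ℤ | s ≠ 0}, ((autocorr f s : ℝ)) ^ 2) / (autocorr f 0 : ℝ) ^ 2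

/-- Expectation of `v` over the `2^ℓ` binary sequences of length `ℓ`, each with
equal probability. -/
def expect (ℓ : ℕ) (v : (ℤ → ℤ) → ℝ) : ℝ :=
  (∑ ε : Fin ℓ → Bool, v (seqOf ℓ ε)) / 2 ^ ℓ

/-- The `p`-th central moment of `v` over binary sequences of length `ℓ`. -/
def centralMoment (p ℓ : ℕ) (v : (ℤ → ℤ) → ℝ) : ℝ :=
  expect ℓ fun f => (v f - expect ℓ v) ^ p

/-! ### Walsh characters -/

/-- The sign of coordinate `j` as a random variable; coordinates `j ≥ ℓ` are the constant `1`, so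
that `sg ℓ j ^ 2 = 1` for every `j`. -/
def sg (ℓ j : ℕ) (ε : Fin ℓ → Bool) : ℝ :=
  if h : j < ℓ then (if ε ⟨j, h⟩ then 1 else -1) else 1

/-- The Walsh character (multilinear monomial) indexed by `A`. -/
def W (ℓ : ℕ) (A : Finset ℕ) : (Fin ℓ → Bool) → ℝ := fun ε => ∏ j ∈ A, sg ℓ j ε

/-- Expectation under the uniform measure on sign vectors, as a linear map. -/
def Ex (ℓ : ℕ) : ((Fin ℓ → Bool) → ℝ) →ₗ[ℝ] ℝ :=
  ((2 : ℝ) ^ ℓ)⁻¹ • ∑ ε : Fin ℓ → Bool, LinearMap.proj ε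

lemma Ex_apply (ℓ : ℕ) (f : (Fin ℓ → Bool) → ℝ) : Ex ℓ f = (∑ ε, f ε) / 2 ^ ℓ := by
  simp [Ex, div_eq_inv_mul, LinearMap.sum_apply]

lemma Ex_mono {ℓ : ℕ} {f g : (Fin ℓ → Bool) → ℝ} (h : ∀ ε, f ε ≤ g ε) : Ex ℓ f ≤ Ex ℓ g := by
  rw [Ex_apply, Ex_apply]
  gcongr
  exact h _

lemma Ex_nonneg {ℓ : ℕ} {f : (Fin ℓ → Bool) → ℝ} (h : ∀ ε, 0 ≤ f ε) : 0 ≤ Ex ℓ f := by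
  rw [Ex_apply]
  exact div_nonneg (Finset.sum_nonneg fun ε _ => h ε) (by positivity)

lemma Ex_const (ℓ : ℕ) (c : ℝ) : Ex ℓ (fun _ => c) = c := by
  rw [Ex_apply]
  simp

lemma Ex_abs_le {ℓ : ℕ} (f : (Fin ℓ → Bool) → ℝ) : |Ex ℓ f| ≤ Ex ℓ (fun ε => |f ε|) := by
  rw [Ex_apply, Ex_apply, abs_div, abs_of_pos (a := (2 : ℝ) ^ ℓ) (by positivity)]
  gcongr
  exact Finset.abs_sum_le_sum_abs _ _

lemma Ex_cauchy {ℓ : ℕ} (f g : (Fin ℓ → Bool) → ℝ) :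
    Ex ℓ (f * g) ^ 2 ≤ Ex ℓ (f ^ 2) * Ex ℓ (g ^ 2) := by
  simp only [Ex_apply, div_pow, Pi.mul_apply, Pi.pow_apply]
  rw [div_mul_div_comm, ← pow_two]
  gcongr
  exact Finset.sum_mul_sq_le_sq_mul_sq _ _ _

/-- Change the sign of coordinate `i`. -/
def flipSign (ℓ i : ℕ) (ε : Fin ℓ → Bool) : Fin ℓ → Bool := fun k => if (k : ℕ) = i then !ε k else ε k

lemma flipSign_flipSign (ℓ i : ℕ) (ε : Fin ℓ → Bool) : flipSign ℓ i (flipSign ℓ i ε) = ε := by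
  funext k
  by_cases h : (k : ℕ) = i <;> simp [flipSign, h]

lemma Ex_flip (ℓ i : ℕ) (f : (Fin ℓ → Bool) → ℝ) : Ex ℓ (fun ε => f (flipSign ℓ i ε)) = Ex ℓ f := by
  rw [Ex_apply, Ex_apply]
  congr 1
  exact Equiv.sum_comp (Function.Involutive.toPerm (flipSign ℓ i) (flipSign_flipSign ℓ i)) f

lemma sg_sq (ℓ j : ℕ) (ε : Fin ℓ → Bool) : sg ℓ j ε * sg ℓ j ε = 1 := by
  unfold sg
  split_ifs <;> norm_num

lemma sg_flip_self {ℓ i : ℕ} (h : i < ℓ) (ε : Fin ℓ → Bool) : sg ℓ i (flipSign ℓ i ε) = -sg ℓ i ε := by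
  by_cases h' : ε ⟨i, h⟩ <;> simp [sg, flipSign, h, h']

lemma sg_flip_ne {ℓ i j : ℕ} (h : j ≠ i) (ε : Fin ℓ → Bool) : sg ℓ j (flipSign ℓ i ε) = sg ℓ j ε := by
  simp [sg, flipSign, h]

lemma W_flip_notMem {ℓ i : ℕ} {A : Finset ℕ} (h : i ∉ A) (ε : Fin ℓ → Bool) :
    W ℓ A (flipSign ℓ i ε) = W ℓ A ε :=
  Finset.prod_congr rfl fun j hj => sg_flip_ne (fun e => h (by rwa [e] at hj)) ε

lemma W_flip_mem {ℓ i : ℕ} {A : Finset ℕ} (hi : i < ℓ) (h : i ∈ A) (ε : Fin ℓ → Bool) :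
    W ℓ A (flipSign ℓ i ε) = -W ℓ A ε := by
  have := W_flip_notMem (ℓ := ℓ) (Finset.notMem_erase i A) ε
  unfold W at *
  rw [← Finset.mul_prod_erase A _ h, ← Finset.mul_prod_erase A (fun j => sg ℓ j ε) h, this,
    sg_flip_self hi]
  ring

lemma W_insert {ℓ i : ℕ} {A : Finset ℕ} (h : i ∉ A) : W ℓ (insert i A) = W ℓ {i} * W ℓ A := by
  funext ε
  simp [W, Finset.prod_insert h]

lemma W_singleton_sq (ℓ i : ℕ) (ε : Fin ℓ → Bool) : W ℓ {i} ε * W ℓ {i} ε = 1 := by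
  simp [W, sg_sq]

lemma W_mul (ℓ : ℕ) (A B : Finset ℕ) : W ℓ A * W ℓ B = W ℓ (symmDiff A B) := by
  funext ε
  have h1 : W ℓ A ε = W ℓ (A \ B) ε * W ℓ (A ∩ B) ε := by
    unfold W
    rw [mul_comm, Finset.prod_inter_mul_prod_sdiff]
  have h2 : W ℓ B ε = W ℓ (B \ A) ε * W ℓ (A ∩ B) ε := by
    unfold W
    rw [mul_comm, Finset.inter_comm, Finset.prod_inter_mul_prod_sdiff]
  have h3 : W ℓ (A ∩ B) ε * W ℓ (A ∩ B) ε = 1 := by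
    unfold W
    rw [← Finset.prod_mul_distrib]
    exact Finset.prod_eq_one fun j _ => sg_sq ℓ j ε
  have h4 : W ℓ (symmDiff A B) ε = W ℓ (A \ B) ε * W ℓ (B \ A) ε := by
    unfold W
    rw [symmDiff_def, Finset.sup_eq_union, Finset.prod_union disjoint_sdiff_sdiff]
  rw [Pi.mul_apply, h1, h2, h4]
  linear_combination W ℓ (A \ B) ε * W ℓ (B \ A) ε * h3

lemma Ex_W {ℓ : ℕ} {A : Finset ℕ} (hA : A ⊆ range ℓ) : Ex ℓ (W ℓ A) = if A = ∅ then 1 else 0 := by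
  split_ifs with h
  · have : W ℓ A = fun _ => 1 := by funext ε; simp [W, h]
    rw [this, Ex_const]
  · obtain ⟨i, hi⟩ := Finset.nonempty_iff_ne_empty.mpr h
    have h1 := Ex_flip ℓ i (W ℓ A)
    have h2 : (fun ε => W ℓ A (flipSign ℓ i ε)) = -W ℓ A := by
      funext ε
      exact W_flip_mem (Finset.mem_range.mp (hA hi)) hi ε
    rw [h2, map_neg] at h1
    linarith

/-- Orthonormality of the Walsh characters, for a weighted sum with repetitions. -/
lemma Ex_sum_sq {ι : Type*} {ℓ : ℕ} (K : Finset ι) (c : ι → ℝ) (S : ι → Finset ℕ)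
    (hS : ∀ k ∈ K, S k ⊆ range ℓ) :
    Ex ℓ ((∑ k ∈ K, c k • W ℓ (S k)) ^ 2)
      = ∑ k ∈ K, ∑ l ∈ K, if S k = S l then c k * c l else 0 := by
  rw [pow_two, Finset.sum_mul_sum, map_sum]
  refine Finset.sum_congr rfl fun k hk => ?_
  rw [map_sum]
  refine Finset.sum_congr rfl fun l hl => ?_
  rw [smul_mul_smul_comm, W_mul, map_smul, Ex_W]
  · by_cases h : S k = S l <;> simp [h]
  · intro x hx
    rcases Finset.mem_symmDiff.mp hx with h | h
    exacts [hS k hk h.1, hS l hl h.1]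

lemma Ex_family_sq {ℓ : ℕ} (F : Finset (Finset ℕ)) (hF : ∀ A ∈ F, A ⊆ range ℓ) :
    Ex ℓ ((∑ A ∈ F, W ℓ A) ^ 2) = (F.card : ℝ) := by
  have := Ex_sum_sq F (fun _ => 1) id hF
  simp only [one_smul, id] at this
  rw [this]
  simp

/-! ### Hypercontractivity -/

/-- Polynomials of degree at most `d` in the signs indexed by `S`. -/
def V (ℓ : ℕ) (S : Finset ℕ) (d : ℕ) : Submodule ℝ ((Fin ℓ → Bool) → ℝ) :=
  Submodule.span ℝ {f | ∃ A ⊆ S, A.card ≤ d ∧ W ℓ A = f}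

lemma W_mem_V {ℓ d : ℕ} {S A : Finset ℕ} (h : A ⊆ S) (hd : A.card ≤ d) : W ℓ A ∈ V ℓ S d :=
  Submodule.subset_span ⟨A, h, hd, rfl⟩

lemma V_mul {ℓ d e : ℕ} {S : Finset ℕ} {f g : (Fin ℓ → Bool) → ℝ} (hf : f ∈ V ℓ S d)
    (hg : g ∈ V ℓ S e) : f * g ∈ V ℓ S (d + e) := by
  have h := Submodule.mul_mem_mul hf hg
  unfold V at h
  rw [Submodule.span_mul_span] at h
  refine Submodule.span_mono ?_ h
  rintro _ ⟨_, ⟨A, hA, hAd, rfl⟩, _, ⟨B, hB, hBe, rfl⟩, rfl⟩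
  refine ⟨symmDiff A B, ?_, ?_, (W_mul ℓ A B).symm⟩
  · intro x hx
    rcases Finset.mem_symmDiff.mp hx with h | h
    exacts [hA h.1, hB h.1]
  · calc (symmDiff A B).card ≤ (A ∪ B).card := Finset.card_le_card (by
          intro x hx
          rcases Finset.mem_symmDiff.mp hx with h | h <;> simp [h.1])
      _ ≤ A.card + B.card := Finset.card_union_le _ _
      _ ≤ d + e := by omega

lemma V_flip {ℓ d i : ℕ} {S : Finset ℕ} (hi : i ∉ S) {f : (Fin ℓ → Bool) → ℝ} (hf : f ∈ V ℓ S d)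
    (ε : Fin ℓ → Bool) : f (flipSign ℓ i ε) = f ε := by
  unfold V at hf
  induction hf using Submodule.span_induction with
  | mem x hx =>
    obtain ⟨A, hA, -, rfl⟩ := hx
    exact W_flip_notMem (fun h => hi (hA h)) ε
  | zero => rfl
  | add x y _ _ hx hy => simp [hx, hy]
  | smul a x _ hx => simp [hx]

lemma V_zero {ℓ : ℕ} {S : Finset ℕ} {f : (Fin ℓ → Bool) → ℝ} (hf : f ∈ V ℓ S 0) :
    ∃ c : ℝ, f = fun _ => c := by
  unfold V at hf
  induction hf using Submodule.span_induction with
  | mem x hx =>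
    obtain ⟨A, hA, h0, rfl⟩ := hx
    have : A = ∅ := Finset.card_eq_zero.mp (by omega)
    exact ⟨1, by funext ε; simp [W, this]⟩
  | zero => exact ⟨0, rfl⟩
  | add x y _ _ hx hy =>
    obtain ⟨a, rfl⟩ := hx
    obtain ⟨b, rfl⟩ := hy
    exact ⟨a + b, rfl⟩
  | smul a x _ hx =>
    obtain ⟨b, rfl⟩ := hx
    exact ⟨a * b, rfl⟩

/-- Separating one variable: `f = x_i g + h`. -/
lemma V_split {ℓ d i : ℕ} {S : Finset ℕ} {f : (Fin ℓ → Bool) → ℝ}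
    (hf : f ∈ V ℓ (insert i S) (d + 1)) :
    ∃ g ∈ V ℓ S d, ∃ h ∈ V ℓ S (d + 1), f = W ℓ {i} * g + h := by
  unfold V at hf
  induction hf using Submodule.span_induction with
  | mem x hx =>
    obtain ⟨A, hA, hAd, rfl⟩ := hx
    by_cases hiA : i ∈ A
    · refine ⟨W ℓ (A.erase i), W_mem_V ?_ ?_, 0, Submodule.zero_mem _, ?_⟩
      · exact Finset.subset_insert_iff.mp hA
      · rw [Finset.card_erase_of_mem hiA]
        omega
      · rw [← W_insert (Finset.notMem_erase i A), Finset.insert_erase hiA, add_zero]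
    · exact ⟨0, Submodule.zero_mem _, W ℓ A,
        W_mem_V ((Finset.subset_insert_iff_of_notMem hiA).mp hA) hAd, by simp⟩
  | zero => exact ⟨0, Submodule.zero_mem _, 0, Submodule.zero_mem _, by simp⟩
  | add x y _ _ hx hy =>
    obtain ⟨g, hg, h, hh, rfl⟩ := hx
    obtain ⟨g', hg', h', hh', rfl⟩ := hy
    exact ⟨g + g', Submodule.add_mem _ hg hg', h + h', Submodule.add_mem _ hh hh', by ring⟩
  | smul a x _ hx =>
    obtain ⟨g, hg, h, hh, rfl⟩ := hx
    exact ⟨a • g, Submodule.smul_mem _ a hg, a • h, Submodule.smul_mem _ a hh, by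
      rw [smul_add, mul_smul_comm]⟩

/-- A function even in coordinate `i` is orthogonal to the sign `x_i`. -/
lemma Ex_odd {ℓ i : ℕ} (hi : i < ℓ) {f : (Fin ℓ → Bool) → ℝ} (hf : ∀ ε, f (flipSign ℓ i ε) = f ε) :
    Ex ℓ (W ℓ {i} * f) = 0 := by
  have h1 := Ex_flip ℓ i (W ℓ {i} * f)
  have h2 : (fun ε => (W ℓ {i} * f) (flipSign ℓ i ε)) = -(W ℓ {i} * f) := by
    funext ε
    simp [W_flip_mem hi (Finset.mem_singleton_self i), hf]
  rw [h2, map_neg] at h1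
  linarith

/-- Bonami's inequality for the fourth moment, by induction on the number of variables. -/
lemma bonami {ℓ : ℕ} (S : Finset ℕ) (hS : S ⊆ range ℓ) : ∀ (d : ℕ) (f : (Fin ℓ → Bool) → ℝ),
    f ∈ V ℓ S d → Ex ℓ (f ^ 4) ≤ 9 ^ d * Ex ℓ (f ^ 2) ^ 2 := by
  have hconst : ∀ (d : ℕ) (c : ℝ), Ex ℓ ((fun _ => c) ^ 4) ≤ 9 ^ d * Ex ℓ ((fun _ => c) ^ 2) ^ 2 := by
    intro d c
    have h4 : ((fun _ => c) ^ 4 : (Fin ℓ → Bool) → ℝ) = fun _ => c ^ 4 := rfl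
    have h2 : ((fun _ => c) ^ 2 : (Fin ℓ → Bool) → ℝ) = fun _ => c ^ 2 := rfl
    rw [h4, h2, Ex_const, Ex_const]
    have : (1 : ℝ) ≤ 9 ^ d := one_le_pow₀ (by norm_num)
    nlinarith [sq_nonneg (c ^ 2)]
  induction S using Finset.induction with
  | empty =>
    intro d f hf
    have : f ∈ V ℓ ∅ 0 := by
      refine Submodule.span_mono ?_ hf
      rintro _ ⟨A, hA, -, rfl⟩
      exact ⟨A, hA, by simp [Finset.subset_empty.mp hA], rfl⟩
    obtain ⟨c, rfl⟩ := V_zero this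
    exact hconst d c
  | insert i S hiS ih =>
    intro d f hf
    have hS' : S ⊆ range ℓ := (Finset.subset_insert i S).trans hS
    have hi : i < ℓ := Finset.mem_range.mp (hS (Finset.mem_insert_self i S))
    cases d with
    | zero =>
      obtain ⟨c, rfl⟩ := V_zero hf
      exact hconst 0 c
    | succ d =>
      obtain ⟨g, hg, h, hh, rfl⟩ := V_split hf
      have ihg := ih hS' d g hg
      have ihh := ih hS' (d + 1) h hh
      have fg := V_flip hiS hg
      have fh := V_flip hiS hh
      have hx2 : W ℓ {i} ^ 2 = 1 := by
        funext ε
        simpa [pow_two] using W_singleton_sq ℓ i ε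
      have e4 : (W ℓ {i} * g + h) ^ 4 = g ^ 4 + (6 : ℝ) • (g ^ 2 * h ^ 2) + h ^ 4
          + W ℓ {i} * (4 * (g ^ 3 * h + g * h ^ 3)) := by
        have : (6 : ℝ) • (g ^ 2 * h ^ 2) = 6 * (g ^ 2 * h ^ 2) := by
          funext ε
          simp
        rw [this]
        linear_combination (g ^ 4 * (W ℓ {i} ^ 2 + 1) + 4 * W ℓ {i} * g ^ 3 * h
          + 6 * g ^ 2 * h ^ 2) * hx2
      have e2 : (W ℓ {i} * g + h) ^ 2 = g ^ 2 + h ^ 2 + W ℓ {i} * (2 * (g * h)) := by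
        linear_combination g ^ 2 * hx2
      have o4 := Ex_odd (f := 4 * (g ^ 3 * h + g * h ^ 3)) hi (by intro ε; simp [fg, fh])
      have o2 := Ex_odd (f := 2 * (g * h)) hi (by intro ε; simp [fg, fh])
      rw [e4, e2, map_add, map_add, map_add, map_add, map_add, o4, o2, map_smul, smul_eq_mul]
      have cs := Ex_cauchy (g ^ 2) (h ^ 2)
      rw [← pow_mul, ← pow_mul] at cs
      set G := Ex ℓ (g ^ 2)
      set H := Ex ℓ (h ^ 2)
      have hG : 0 ≤ G := Ex_nonneg fun ε => sq_nonneg _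
      have hH : 0 ≤ H := Ex_nonneg fun ε => sq_nonneg _
      have hg4 : 0 ≤ Ex ℓ (g ^ 4) := Ex_nonneg fun ε => by simp only [Pi.pow_apply]; positivity
      have hh4 : 0 ≤ Ex ℓ (h ^ 4) := Ex_nonneg fun ε => by simp only [Pi.pow_apply]; positivity
      have h9 : (0 : ℝ) < 9 ^ d := by positivity
      have key : Ex ℓ (g ^ 2 * h ^ 2) ≤ 3 * 9 ^ d * (G * H) := by
        refine le_of_sq_le_sq ?_ (by positivity)
        calc _ ≤ _ := cs
          _ ≤ (9 ^ d * G ^ 2) * (9 ^ (d + 1) * H ^ 2) := by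
            simpa using mul_le_mul ihg ihh hh4 (by positivity)
          _ = _ := by ring
      rw [pow_succ (9 : ℝ)] at ihh ⊢
      nlinarith [mul_nonneg h9.le (sq_nonneg G)]

/-- Every even moment of order `2 ^ (m + 1)` of a polynomial of bounded degree is controlled by the
second moment: the fourth-moment inequality is applied to `f`, `f ^ 2`, `f ^ 4`, … -/
lemma hyper (m : ℕ) : ∀ d : ℕ, ∃ C : ℝ, 0 ≤ C ∧ ∀ (ℓ : ℕ) (f : (Fin ℓ → Bool) → ℝ),
    f ∈ V ℓ (range ℓ) d → Ex ℓ (f ^ 2 ^ (m + 1)) ≤ C * Ex ℓ (f ^ 2) ^ 2 ^ m := by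
  induction m with
  | zero => exact fun d => ⟨1, zero_le_one, fun ℓ f _ => by simp⟩
  | succ m ih =>
    intro d
    obtain ⟨C, hC, h⟩ := ih (d + d)
    refine ⟨C * (9 ^ d) ^ 2 ^ m, by positivity, fun ℓ f hf => ?_⟩
    have h1 := h ℓ (f ^ 2) (by rw [pow_two]; exact V_mul hf hf)
    have h2 := bonami (range ℓ) subset_rfl d f hf
    rw [← pow_mul, ← pow_mul] at h1
    have e : 2 ^ (m + 1 + 1) = 2 * 2 ^ (m + 1) := by ring
    rw [e]
    refine h1.trans ?_
    rw [mul_assoc, pow_succ 2 m, mul_comm (2 ^ m) 2, pow_mul (Ex ℓ (f ^ 2)), ← mul_pow]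
    gcongr
    exact Ex_nonneg fun ε => (by decide : Even (2 * 2)).pow_nonneg (f ε)

/-- If the second moment is bounded, all absolute moments are. -/
lemma moment_bound (d q : ℕ) (M : ℝ) : ∃ C : ℝ, 0 ≤ C ∧ ∀ (ℓ : ℕ) (f : (Fin ℓ → Bool) → ℝ),
    f ∈ V ℓ (range ℓ) d → Ex ℓ (f ^ 2) ≤ M → Ex ℓ (fun ε => |f ε| ^ q) ≤ C := by
  obtain ⟨C, hC, h⟩ := hyper q d
  refine ⟨1 + C * |M| ^ 2 ^ q, by positivity, fun ℓ f hf hM => ?_⟩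
  have h0 : 0 ≤ Ex ℓ (f ^ 2) := Ex_nonneg fun ε => sq_nonneg _
  calc Ex ℓ (fun ε => |f ε| ^ q) ≤ Ex ℓ ((fun _ => 1) + f ^ 2 ^ (q + 1)) := by
        refine Ex_mono fun ε => ?_
        have hev : Even (2 ^ (q + 1)) := ⟨2 ^ q, by ring⟩
        simp only [Pi.add_apply, Pi.pow_apply]
        rw [← hev.pow_abs]
        rcases le_total |f ε| 1 with h1 | h1
        · have := pow_le_one₀ (n := q) (abs_nonneg _) h1
          have : 0 ≤ |f ε| ^ 2 ^ (q + 1) := by positivity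
          linarith
        · have : |f ε| ^ q ≤ |f ε| ^ 2 ^ (q + 1) := pow_le_pow_right₀ h1
            ((Nat.lt_two_pow_self).le.trans (Nat.pow_le_pow_right (by norm_num) (by omega)))
          linarith
    _ = 1 + Ex ℓ (f ^ 2 ^ (q + 1)) := by rw [map_add, Ex_const]
    _ ≤ 1 + C * |M| ^ 2 ^ q := by
      gcongr
      refine (h ℓ f hf).trans ?_
      gcongr
      exact hM.trans (le_abs_self M)

/-! ### Elementary inequalities -/

lemma pow_taylor (q : ℕ) : ∃ K : ℝ, 0 ≤ K ∧ ∀ t y : ℝ,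
    |t ^ (q + 1) - (t - 2 * y) ^ (q + 1) - 2 * (q + 1) * y * t ^ q|
      ≤ K * y ^ 2 * (1 + |t| + |y|) ^ q := by
  induction q with
  | zero => exact ⟨0, le_rfl, fun t y => by simp⟩
  | succ q ih =>
    obtain ⟨K, hK, h⟩ := ih
    refine ⟨2 * K + 4 * (q + 1), by positivity, fun t y => ?_⟩
    have h := h t y
    set e := t ^ (q + 1) - (t - 2 * y) ^ (q + 1) - 2 * (q + 1) * y * t ^ q with he
    set M := 1 + |t| + |y| with hM
    have ht : |t| ≤ M := by have := abs_nonneg y; linarith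
    have hty : |t - 2 * y| ≤ 2 * M := by
      have h1 := abs_sub t (2 * y)
      rw [abs_mul, abs_two] at h1
      have := abs_nonneg t
      linarith
    have hM1 : 1 ≤ M := by have := abs_nonneg y; have := abs_nonneg t; linarith
    have hMq : |t| ^ q ≤ M ^ (q + 1) :=
      (pow_le_pow_left₀ (abs_nonneg t) ht q).trans (pow_le_pow_right₀ hM1 (by omega))
    have e1 : t ^ (q + 1 + 1) - (t - 2 * y) ^ (q + 1 + 1)
        - 2 * ((q + 1 : ℕ) + 1) * y * t ^ (q + 1) = (t - 2 * y) * e - 4 * (q + 1) * y ^ 2 * t ^ q := by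
      rw [he]
      push_cast
      ring
    rw [e1]
    calc _ ≤ |t - 2 * y| * |e| + 4 * (q + 1) * y ^ 2 * |t| ^ q := by
          refine (abs_sub _ _).trans (le_of_eq ?_)
          rw [abs_mul, abs_mul, abs_pow, abs_of_nonneg (a := 4 * ((q : ℝ) + 1) * y ^ 2)
            (by positivity)]
      _ ≤ 2 * M * (K * y ^ 2 * M ^ q) + 4 * (q + 1) * y ^ 2 * M ^ (q + 1) := by gcongr
      _ = _ := by ring

lemma pow_perturb (p : ℕ) : ∃ K : ℝ, 0 ≤ K ∧ ∀ a r : ℝ,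
    |(a + r) ^ p - a ^ p| ≤ K * |r| * (1 + |a| + |r|) ^ p := by
  induction p with
  | zero => exact ⟨0, le_rfl, fun a r => by simp⟩
  | succ p ih =>
    obtain ⟨K, hK, h⟩ := ih
    refine ⟨K + 1, by positivity, fun a r => ?_⟩
    have h := h a r
    set M := 1 + |a| + |r| with hM
    have har : |a + r| ≤ M := by have := abs_add_le a r; linarith
    have ha : |a| ≤ M := by have := abs_nonneg r; linarith
    have hM1 : 1 ≤ M := by have := abs_nonneg r; have := abs_nonneg a; linarith
    have hMq : |a| ^ p ≤ M ^ (p + 1) :=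
      (pow_le_pow_left₀ (abs_nonneg a) ha p).trans (pow_le_pow_right₀ hM1 (by omega))
    have e1 : (a + r) ^ (p + 1) - a ^ (p + 1) = (a + r) * ((a + r) ^ p - a ^ p) + r * a ^ p := by
      ring
    rw [e1]
    calc _ ≤ |a + r| * |(a + r) ^ p - a ^ p| + |r| * |a| ^ p := by
          refine (abs_add_le _ _).trans (le_of_eq ?_)
          rw [abs_mul, abs_mul, abs_pow]
      _ ≤ M * (K * |r| * M ^ p) + |r| * M ^ (p + 1) := by gcongr
      _ = _ := by ring

lemma three_pow (n : ℕ) (a b : ℝ) (ha : 0 ≤ a) (hb : 0 ≤ b) :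
    (1 + a + b) ^ n ≤ 3 ^ n * (1 + a ^ n + b ^ n) := by
  have h : ∀ m : ℝ, 0 ≤ m → 1 ≤ m → a ≤ m → b ≤ m → m ^ n ≤ 1 + a ^ n + b ^ n →
      (1 + a + b) ^ n ≤ 3 ^ n * (1 + a ^ n + b ^ n) := by
    intro m h0 h1 h2 h3 h4
    calc (1 + a + b) ^ n ≤ (3 * m) ^ n := by gcongr; linarith
      _ = 3 ^ n * m ^ n := mul_pow _ _ _
      _ ≤ _ := by gcongr
  have pa : 0 ≤ a ^ n := by positivity
  have pb : 0 ≤ b ^ n := by positivity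
  rcases le_total a b with hab | hab
  · rcases le_total b 1 with h1 | h1
    · exact h 1 zero_le_one le_rfl (hab.trans h1) h1 (by rw [one_pow]; linarith)
    · exact h b hb h1 hab le_rfl (by linarith)
  · rcases le_total a 1 with h1 | h1
    · exact h 1 zero_le_one le_rfl h1 (hab.trans h1) (by rw [one_pow]; linarith)
    · exact h a ha h1 le_rfl hab (by linarith)

/-- Moments of `1 + |f| + |g|` for `f`, `g` of bounded degree and bounded second moment. -/
lemma moment_bound₂ (d n : ℕ) (M : ℝ) : ∃ C : ℝ, 0 ≤ C ∧ ∀ (ℓ : ℕ) (f g : (Fin ℓ → Bool) → ℝ),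
    f ∈ V ℓ (range ℓ) d → g ∈ V ℓ (range ℓ) d → Ex ℓ (f ^ 2) ≤ M → Ex ℓ (g ^ 2) ≤ M →
    Ex ℓ (fun ε => (1 + |f ε| + |g ε|) ^ n) ≤ C := by
  obtain ⟨C, hC, h⟩ := moment_bound d n M
  refine ⟨3 ^ n * (1 + C + C), by positivity, fun ℓ f g hf hg hfM hgM => ?_⟩
  calc _ ≤ Ex ℓ ((3 : ℝ) ^ n • ((fun _ => 1) + (fun ε => |f ε| ^ n) + fun ε => |g ε| ^ n)) :=
        Ex_mono fun ε => three_pow n _ _ (abs_nonneg _) (abs_nonneg _)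
    _ = 3 ^ n * (1 + Ex ℓ (fun ε => |f ε| ^ n) + Ex ℓ (fun ε => |g ε| ^ n)) := by
      rw [map_smul, map_add, map_add, Ex_const, smul_eq_mul]
    _ ≤ _ := by
      gcongr
      exacts [h ℓ f hf hfM, h ℓ g hg hgM]

/-! ### Counting the four-element sets -/

/-- The triples `(j, s, u)` of a starting point `j` and two shifts `1 ≤ s < u` for which
`j, j + s, j + u, j + s + u` are four positions of a sequence of length `ℓ`. -/
def Tri (ℓ : ℕ) : Finset (ℕ × ℕ × ℕ) :=
  (range ℓ ×ˢ range ℓ ×ˢ range ℓ).filter fun t => 1 ≤ t.2.1 ∧ t.2.1 < t.2.2 ∧ t.1 + t.2.1 + t.2.2 < ℓ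

/-- The set of the four positions described by `(j, s, u)`. -/
def quad (t : ℕ × ℕ × ℕ) : Finset ℕ := {t.1, t.1 + t.2.1, t.1 + t.2.2, t.1 + t.2.1 + t.2.2}

/-- The four-element subsets of `{0, …, ℓ - 1}` splitting into two pairs of equal sum. -/
def Quads (ℓ : ℕ) : Finset (Finset ℕ) := (Tri ℓ).image quad

lemma quad_injOn (ℓ : ℕ) : Set.InjOn quad (Tri ℓ) := by
  rintro ⟨j, s, u⟩ h ⟨j', s', u'⟩ h' e
  simp only [Tri, Finset.coe_filter, Set.mem_ofPred_eq] at h h'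
  obtain ⟨-, h1, h2, -⟩ := h
  obtain ⟨-, h1', h2', -⟩ := h'
  have e' : ∀ x, x ∈ quad (j, s, u) ↔ x ∈ quad (j', s', u') := fun x => by rw [e]
  simp only [quad, Finset.mem_insert, Finset.mem_singleton] at e'
  have a1 := (e' j).1 (by simp)
  have a2 := (e' (j + s)).1 (by simp)
  have a3 := (e' (j + u)).1 (by simp)
  have b1 := (e' j').2 (by simp)
  have b2 := (e' (j' + s')).2 (by simp)
  have b3 := (e' (j' + u')).2 (by simp)
  clear e e'
  have hj : j = j' := by omega
  subst hj
  have hs : s = s' := by omega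
  subst hs
  have hu : u = u' := by omega
  subst hu
  rfl

lemma Quads_card_eq (ℓ : ℕ) : (Quads ℓ).card = (Tri ℓ).card :=
  Finset.card_image_of_injOn (quad_injOn ℓ)

lemma Quads_card_le (ℓ : ℕ) : (Quads ℓ).card ≤ ℓ ^ 3 := by
  rw [Quads_card_eq]
  refine (Finset.card_filter_le _ _).trans (le_of_eq ?_)
  simp only [Finset.card_product, Finset.card_range]
  ring

lemma Quads_subset {ℓ : ℕ} {A : Finset ℕ} (hA : A ∈ Quads ℓ) : A ⊆ range ℓ := by
  obtain ⟨⟨j, s, u⟩, h, rfl⟩ := Finset.mem_image.mp hA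
  simp only [Tri, Finset.mem_filter] at h
  intro x hx
  simp only [quad, Finset.mem_insert, Finset.mem_singleton] at hx
  rw [Finset.mem_range]
  omega

lemma Quads_card_four {ℓ : ℕ} {A : Finset ℕ} (hA : A ∈ Quads ℓ) : A.card = 4 := by
  obtain ⟨⟨j, s, u⟩, h, rfl⟩ := Finset.mem_image.mp hA
  simp only [Tri, Finset.mem_filter] at h
  unfold quad
  rw [Finset.card_eq_succ]
  refine ⟨j, {j + s, j + u, j + s + u}, ?_, rfl, Finset.card_eq_three.mpr
    ⟨_, _, _, ?_, ?_, ?_, rfl⟩⟩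
  · simp only [Finset.mem_insert, Finset.mem_singleton]
    omega
  all_goals omega

/-- Each element of a set in `Quads ℓ` has a partner with which it makes up half of the total. -/
lemma Quads_partner {ℓ : ℕ} {A : Finset ℕ} (hA : A ∈ Quads ℓ) {d : ℕ} (hd : d ∈ A) :
    ∃ c ∈ A, c ≠ d ∧ 2 * (c + d) = ∑ x ∈ A, x := by
  obtain ⟨⟨j, s, u⟩, h, rfl⟩ := Finset.mem_image.mp hA
  simp only [Tri, Finset.mem_filter] at h
  have hsum : ∑ x ∈ quad (j, s, u), x = j + ((j + s) + ((j + u) + (j + s + u))) := by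
    unfold quad
    rw [Finset.sum_insert, Finset.sum_insert, Finset.sum_insert, Finset.sum_singleton]
    all_goals
      simp only [Finset.mem_insert, Finset.mem_singleton]
      omega
  rw [hsum]
  simp only [quad, Finset.mem_insert, Finset.mem_singleton, exists_eq_or_imp, exists_eq_left] at hd ⊢
  omega

/-- Sets in `Quads ℓ` satisfy one linear equation, so prescribing `m ≤ 3` elements leaves `3 - m`
degrees of freedom. -/
lemma card_superset_le (ℓ k : ℕ) : ∀ P : Finset ℕ, P.card + k = 3 →
    ((Quads ℓ).filter fun A => P ⊆ A).card ≤ 3 * ℓ ^ k := by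
  induction k with
  | zero =>
    intro P hP
    have hsub : ((Quads ℓ).filter fun A => P ⊆ A)
        ⊆ P.image fun c => insert ((∑ x ∈ P, x) - 2 * c) P := by
      intro A hA
      obtain ⟨hA, hPA⟩ := Finset.mem_filter.mp hA
      have h4 := Quads_card_four hA
      obtain ⟨d, hd, rfl⟩ : ∃ d, d ∉ P ∧ insert d P = A := by
        have h1 : (A \ P).card = 1 := by rw [Finset.card_sdiff_of_subset hPA]; omega
        obtain ⟨d, hd⟩ := Finset.card_eq_one.mp h1
        refine ⟨d, ?_, ?_⟩
        · have : d ∈ A \ P := by rw [hd]; exact Finset.mem_singleton_self d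
          exact (Finset.mem_sdiff.mp this).2
        · rw [Finset.insert_eq, ← hd, Finset.sdiff_union_of_subset hPA]
      obtain ⟨c, hc, hcd, hsum⟩ := Quads_partner hA (Finset.mem_insert_self d P)
      have hcP : c ∈ P := by simpa [hcd] using hc
      rw [Finset.sum_insert hd] at hsum
      refine Finset.mem_image.mpr ⟨c, hcP, ?_⟩
      have hdc : (∑ x ∈ P, x) - 2 * c = d := by omega
      rw [hdc]
    calc _ ≤ _ := Finset.card_le_card hsub
      _ ≤ P.card := Finset.card_image_le
      _ ≤ _ := by rw [pow_zero]; omega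
  | succ k ih =>
    intro P hP
    have hsub : ((Quads ℓ).filter fun A => P ⊆ A)
        ⊆ (range ℓ \ P).biUnion fun c => (Quads ℓ).filter fun A => insert c P ⊆ A := by
      intro A hA
      obtain ⟨hA, hPA⟩ := Finset.mem_filter.mp hA
      have h4 := Quads_card_four hA
      have h1 : (A \ P).Nonempty := by
        rw [← Finset.card_pos, Finset.card_sdiff_of_subset hPA]
        omega
      obtain ⟨c, hc⟩ := h1
      obtain ⟨hcA, hcP⟩ := Finset.mem_sdiff.mp hc
      exact Finset.mem_biUnion.mpr ⟨c, Finset.mem_sdiff.mpr ⟨Quads_subset hA hcA, hcP⟩,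
        Finset.mem_filter.mpr ⟨hA, Finset.insert_subset hcA hPA⟩⟩
    calc _ ≤ _ := Finset.card_le_card hsub
      _ ≤ (range ℓ \ P).card * (3 * ℓ ^ k) := by
        refine Finset.card_biUnion_le_card_mul _ _ _ fun c hc => ih _ ?_
        rw [Finset.card_insert_of_notMem (Finset.mem_sdiff.mp hc).2]
        omega
      _ ≤ ℓ * (3 * ℓ ^ k) := by
        gcongr
        exact (Finset.card_le_card Finset.sdiff_subset).trans (Finset.card_range ℓ).le
      _ = _ := by ring

/-- The same bound when the `m = 3 - k` prescribed elements are only known to lie in `S`. -/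
lemma card_inter_le (ℓ k m : ℕ) (hkm : m + k = 3) (S : Finset ℕ) :
    ((Quads ℓ).filter fun A => m ≤ (A ∩ S).card).card ≤ 2 ^ S.card * (3 * ℓ ^ k) := by
  have hsub : ((Quads ℓ).filter fun A => m ≤ (A ∩ S).card)
      ⊆ (S.powersetCard m).biUnion fun P => (Quads ℓ).filter fun A => P ⊆ A := by
    intro A hA
    obtain ⟨hA, hm⟩ := Finset.mem_filter.mp hA
    obtain ⟨P, hP, hPm⟩ := Finset.exists_subset_card_eq hm
    exact Finset.mem_biUnion.mpr ⟨P, Finset.mem_powersetCard.mpr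
      ⟨hP.trans Finset.inter_subset_right, hPm⟩,
      Finset.mem_filter.mpr ⟨hA, hP.trans Finset.inter_subset_left⟩⟩
  calc _ ≤ _ := Finset.card_le_card hsub
    _ ≤ (S.powersetCard m).card * (3 * ℓ ^ k) := by
      refine Finset.card_biUnion_le_card_mul _ _ _ fun P hP => card_superset_le ℓ k P ?_
      rw [(Finset.mem_powersetCard.mp hP).2]
      exact hkm
    _ ≤ _ := by
      gcongr
      rw [Finset.card_powersetCard]
      exact Nat.choose_le_two_pow _ _

lemma card_mem_le (ℓ i : ℕ) : ((Quads ℓ).filter fun A => i ∈ A).card ≤ 3 * ℓ ^ 2 := by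
  have := card_superset_le ℓ 2 {i} (by simp)
  simpa using this

lemma card_symmDiff_add (A B : Finset ℕ) :
    (symmDiff A B).card + 2 * (A ∩ B).card = A.card + B.card := by
  rw [symmDiff_def, Finset.sup_eq_union, Finset.card_union_of_disjoint disjoint_sdiff_sdiff]
  have h1 := Finset.card_sdiff_add_card_inter A B
  have h2 := Finset.card_sdiff_add_card_inter B A
  rw [Finset.inter_comm B A] at h2
  omega

/-- Ordered pairs of distinct, intersecting sets of `Quads ℓ`. -/
def Pairs (ℓ : ℕ) : Finset (Finset ℕ × Finset ℕ) :=
  (Quads ℓ ×ˢ Quads ℓ).filter fun q => q.1 ≠ q.2 ∧ (q.1 ∩ q.2).Nonempty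

lemma Pairs_inter {ℓ : ℕ} {q : Finset ℕ × Finset ℕ} (hq : q ∈ Pairs ℓ) :
    q.1 ∈ Quads ℓ ∧ q.2 ∈ Quads ℓ ∧ 1 ≤ (q.1 ∩ q.2).card ∧ (q.1 ∩ q.2).card ≤ 3 ∧
      (symmDiff q.1 q.2).card + 2 * (q.1 ∩ q.2).card = 8 := by
  obtain ⟨h, hne, hin⟩ := Finset.mem_filter.mp hq
  obtain ⟨h1, h2⟩ := Finset.mem_product.mp h
  have c1 := Quads_card_four h1
  have c2 := Quads_card_four h2
  refine ⟨h1, h2, Finset.card_pos.mpr hin, ?_, ?_⟩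
  · by_contra! h4
    have e1 := Finset.eq_of_subset_of_card_le (Finset.inter_subset_left (s₁ := q.1) (s₂ := q.2))
      (by omega)
    have e2 := Finset.eq_of_subset_of_card_le (Finset.inter_subset_right (s₁ := q.1) (s₂ := q.2))
      (by omega)
    exact hne (e1.symm.trans e2)
  · rw [card_symmDiff_add, c1, c2]

/-- A given symmetric difference, of size `6 - 2 * k`, arises from `O(ℓ ^ k)` pairs. -/
lemma Pairs_fiber {ℓ k : ℕ} {q : Finset ℕ × Finset ℕ} (hq : q ∈ Pairs ℓ)
    (hk : (q.1 ∩ q.2).card = k + 1) :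
    ((Pairs ℓ).filter fun r => symmDiff q.1 q.2 = symmDiff r.1 r.2).card ≤ 64 * (3 * ℓ ^ k) := by
  obtain ⟨h1, h2, h3, h4, h5⟩ := Pairs_inter hq
  have hle : ((Pairs ℓ).filter fun r => symmDiff q.1 q.2 = symmDiff r.1 r.2).card
      ≤ ((Quads ℓ).filter fun A => 3 - k ≤ (A ∩ symmDiff q.1 q.2).card).card := by
    refine Finset.card_le_card_of_injOn Prod.fst ?_ ?_
    · intro r hr
      obtain ⟨hr, he⟩ := Finset.mem_filter.mp (Finset.mem_coe.mp hr)
      obtain ⟨g1, g2, g3, g4, g5⟩ := Pairs_inter hr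
      rw [← he] at g5
      refine Finset.mem_coe.mpr (Finset.mem_filter.mpr ⟨g1, ?_⟩)
      have hsub : r.1 \ r.2 ⊆ r.1 ∩ symmDiff q.1 q.2 := by
        intro x hx
        rw [he, Finset.mem_inter, Finset.mem_symmDiff]
        have := Finset.mem_sdiff.mp hx
        exact ⟨this.1, Or.inl this⟩
      have c1 := Finset.card_le_card hsub
      have c2 := Finset.card_sdiff_add_card_inter r.1 r.2
      rw [Quads_card_four g1] at c2
      omega
    · intro r hr r' hr' e
      have he := (Finset.mem_filter.mp (Finset.mem_coe.mp hr)).2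
      have he' := (Finset.mem_filter.mp (Finset.mem_coe.mp hr')).2
      have e : r.1 = r'.1 := e
      refine Prod.ext e ?_
      rw [he, ← e] at he'
      exact symmDiff_right_injective _ he'
  refine hle.trans ((card_inter_le ℓ k (3 - k) (by omega) _).trans ?_)
  gcongr
  calc 2 ^ (symmDiff q.1 q.2).card ≤ 2 ^ 6 := Nat.pow_le_pow_right (by norm_num) (by omega)
    _ = 64 := by norm_num

/-- There are `O(ℓ ^ (6 - m))` pairs sharing `m` elements. -/
lemma Pairs_card (ℓ k m : ℕ) (hkm : k + m = 3) :
    ((Pairs ℓ).filter fun q => (q.1 ∩ q.2).card = m).card ≤ ℓ ^ 3 * (16 * (3 * ℓ ^ k)) := by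
  have hsub : ((Pairs ℓ).filter fun q => (q.1 ∩ q.2).card = m)
      ⊆ (Quads ℓ).biUnion fun A =>
        ((Quads ℓ).filter fun B => m ≤ (B ∩ A).card).image fun B => (A, B) := by
    intro q hq
    obtain ⟨hq, hm⟩ := Finset.mem_filter.mp hq
    obtain ⟨h1, h2, -⟩ := Pairs_inter hq
    refine Finset.mem_biUnion.mpr ⟨q.1, h1, Finset.mem_image.mpr ⟨q.2,
      Finset.mem_filter.mpr ⟨h2, ?_⟩, rfl⟩⟩
    rw [Finset.inter_comm, hm]
  calc _ ≤ _ := Finset.card_le_card hsub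
    _ ≤ (Quads ℓ).card * (16 * (3 * ℓ ^ k)) := by
      refine Finset.card_biUnion_le_card_mul _ _ _ fun A hA => ?_
      have := card_inter_le ℓ k m (by omega) A
      rw [Quads_card_four hA] at this
      exact Finset.card_image_le.trans this
    _ ≤ _ := by
      gcongr
      exact Quads_card_le ℓ

/-- The number of coincidences among symmetric differences of intersecting pairs is `O(ℓ ^ 5)`,
below the `ℓ ^ 6` that would obstruct concentration of the carré du champ. -/
lemma Pairs_energy (ℓ : ℕ) :
    ∑ q ∈ Pairs ℓ, ((Pairs ℓ).filter fun r => symmDiff q.1 q.2 = symmDiff r.1 r.2).card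
      ≤ 30000 * ℓ ^ 5 := by
  have hmaps : ∀ q ∈ Pairs ℓ, (q.1 ∩ q.2).card - 1 ∈ range 3 := by
    intro q hq
    obtain ⟨-, -, h3, h4, -⟩ := Pairs_inter hq
    rw [Finset.mem_range]
    omega
  rw [← Finset.sum_fiberwise_of_maps_to hmaps]
  have hk : ∀ k ∈ range 3, ∑ q ∈ (Pairs ℓ).filter (fun q => (q.1 ∩ q.2).card - 1 = k),
      ((Pairs ℓ).filter fun r => symmDiff q.1 q.2 = symmDiff r.1 r.2).card ≤ 10000 * ℓ ^ 5 := by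
    intro k hk
    have hk := Finset.mem_range.mp hk
    have hfil : (Pairs ℓ).filter (fun q => (q.1 ∩ q.2).card - 1 = k)
        = (Pairs ℓ).filter (fun q => (q.1 ∩ q.2).card = k + 1) := by
      refine Finset.filter_congr fun q hq => ?_
      obtain ⟨-, -, h3, h4, -⟩ := Pairs_inter hq
      omega
    rw [hfil]
    calc _ ≤ ((Pairs ℓ).filter (fun q => (q.1 ∩ q.2).card = k + 1)).card • (64 * (3 * ℓ ^ k)) := by
          refine Finset.sum_le_card_nsmul _ _ _ fun q hq => ?_
          obtain ⟨hq, hqk⟩ := Finset.mem_filter.mp hq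
          exact Pairs_fiber hq hqk
      _ ≤ (ℓ ^ 3 * (16 * (3 * ℓ ^ (2 - k)))) * (64 * (3 * ℓ ^ k)) := by
          rw [smul_eq_mul]
          gcongr
          exact Pairs_card ℓ (2 - k) (k + 1) (by omega)
      _ = 9216 * (ℓ ^ 3 * (ℓ ^ (2 - k) * ℓ ^ k)) := by ring
      _ = 9216 * ℓ ^ 5 := by rw [← pow_add, ← pow_add]; congr 2; omega
      _ ≤ _ := by gcongr; norm_num
  calc _ ≤ (range 3).card • (10000 * ℓ ^ 5) := Finset.sum_le_card_nsmul _ _ _ hk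
    _ = _ := by rw [Finset.card_range, smul_eq_mul]; ring

/-! ### The recursion for the moments of the degree-four part -/

/-- The sum of the Walsh characters of the sets in `Quads ℓ`. -/
def TT (ℓ : ℕ) : (Fin ℓ → Bool) → ℝ := ∑ A ∈ Quads ℓ, W ℓ A

/-- The part of `TT ℓ` that is odd in coordinate `i`. -/
def TI (ℓ i : ℕ) : (Fin ℓ → Bool) → ℝ := ∑ A ∈ (Quads ℓ).filter (fun A => i ∈ A), W ℓ A

lemma TT_mem (ℓ : ℕ) : TT ℓ ∈ V ℓ (range ℓ) 4 :=
  Submodule.sum_mem _ fun _ hA => W_mem_V (Quads_subset hA) (Quads_card_four hA).le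

lemma TI_mem (ℓ i : ℕ) : TI ℓ i ∈ V ℓ (range ℓ) 4 :=
  Submodule.sum_mem _ fun A hA =>
    have hA : A ∈ Quads ℓ := (Finset.mem_filter.mp hA).1
    W_mem_V (Quads_subset hA) (Quads_card_four hA).le

lemma TT_sq (ℓ : ℕ) : Ex ℓ (TT ℓ ^ 2) = ((Quads ℓ).card : ℝ) :=
  Ex_family_sq _ fun _ => Quads_subset

lemma TI_sq_le (ℓ i : ℕ) : Ex ℓ (TI ℓ i ^ 2) ≤ 3 * (ℓ : ℝ) ^ 2 := by
  unfold TI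
  rw [Ex_family_sq _ fun A hA => Quads_subset (Finset.mem_filter.mp hA).1]
  exact_mod_cast card_mem_le ℓ i

lemma Ex_TT (ℓ : ℕ) : Ex ℓ (TT ℓ) = 0 := by
  unfold TT
  rw [map_sum]
  refine Finset.sum_eq_zero fun A hA => ?_
  rw [Ex_W (Quads_subset hA), if_neg]
  rintro rfl
  simpa using Quads_card_four hA

lemma sum_TI (ℓ : ℕ) (ε : Fin ℓ → Bool) : ∑ i ∈ range ℓ, TI ℓ i ε = 4 * TT ℓ ε := by
  simp only [TI, TT, Finset.sum_apply, Finset.sum_filter, Finset.mul_sum]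
  rw [Finset.sum_comm]
  refine Finset.sum_congr rfl fun A hA => ?_
  rw [← Finset.sum_filter, Finset.filter_mem_eq_inter,
    Finset.inter_eq_right.mpr (Quads_subset hA), Finset.sum_const, Quads_card_four hA]
  simp

lemma TI_flip {ℓ i : ℕ} (hi : i < ℓ) (ε : Fin ℓ → Bool) : TI ℓ i (flipSign ℓ i ε) = -TI ℓ i ε := by
  simp only [TI, Finset.sum_apply, ← Finset.sum_neg_distrib]
  exact Finset.sum_congr rfl fun A hA => W_flip_mem hi (Finset.mem_filter.mp hA).2 ε

lemma TT_flip {ℓ i : ℕ} (hi : i < ℓ) (ε : Fin ℓ → Bool) :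
    TT ℓ (flipSign ℓ i ε) = TT ℓ ε - 2 * TI ℓ i ε := by
  simp only [TI, TT, Finset.sum_apply, Finset.sum_filter, Finset.mul_sum, ← Finset.sum_sub_distrib]
  refine Finset.sum_congr rfl fun A _ => ?_
  split_ifs with h
  · rw [W_flip_mem hi h]
    ring
  · rw [W_flip_notMem h]
    ring

/-- The carré du champ `∑ TI²` expanded in Walsh characters, with its mean separated. -/
lemma sum_TI_sq (ℓ : ℕ) : ∑ i ∈ range ℓ, TI ℓ i ^ 2 = (fun _ => 4 * ((Quads ℓ).card : ℝ))
    + ∑ q ∈ Pairs ℓ, ((q.1 ∩ q.2).card : ℝ) • W ℓ (symmDiff q.1 q.2) := by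
  have h1 : ∑ i ∈ range ℓ, TI ℓ i ^ 2 = ∑ q ∈ Quads ℓ ×ˢ Quads ℓ,
      ((q.1 ∩ q.2).card : ℝ) • W ℓ (symmDiff q.1 q.2) := by
    have h2 : ∀ i ∈ range ℓ, TI ℓ i ^ 2 = ∑ q ∈ Quads ℓ ×ˢ Quads ℓ,
        if i ∈ q.1 ∩ q.2 then W ℓ (symmDiff q.1 q.2) else 0 := by
      intro i _
      unfold TI
      rw [pow_two, Finset.sum_mul_sum, Finset.sum_filter, Finset.sum_product]
      refine Finset.sum_congr rfl fun A _ => ?_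
      by_cases hA : i ∈ A
      · simp only [hA, if_true, Finset.sum_filter, W_mul, Finset.mem_inter, true_and]
      · simp [hA]
    rw [Finset.sum_congr rfl h2, Finset.sum_comm]
    refine Finset.sum_congr rfl fun q hq => ?_
    rw [← Finset.sum_filter, Finset.filter_mem_eq_inter, Finset.inter_eq_right.mpr
      (Finset.inter_subset_left.trans (Quads_subset (Finset.mem_product.mp hq).1)),
      Finset.sum_const, Nat.cast_smul_eq_nsmul]
  rw [h1, ← Finset.sum_filter_add_sum_filter_not _ (fun q => q.1 = q.2)]
  congr 1
  · have h3 : ∀ q ∈ (Quads ℓ ×ˢ Quads ℓ).filter (fun q => q.1 = q.2),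
        ((q.1 ∩ q.2).card : ℝ) • W ℓ (symmDiff q.1 q.2) = fun _ => 4 := by
      rintro ⟨A, B⟩ hq
      obtain ⟨hq, he⟩ := Finset.mem_filter.mp hq
      dsimp only at he
      subst he
      funext ε
      simp [W, Quads_card_four (Finset.mem_product.mp hq).1]
    have h4 : ((Quads ℓ ×ˢ Quads ℓ).filter (fun q => q.1 = q.2)).card = (Quads ℓ).card := by
      rw [← Finset.diag_eq_filter, Finset.diag_card]
    rw [Finset.sum_congr rfl h3, Finset.sum_const, h4]
    funext ε
    simp [mul_comm]
  · symm
    refine Finset.sum_subset ?_ ?_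
    · intro q hq
      obtain ⟨h, hne, -⟩ := Finset.mem_filter.mp hq
      exact Finset.mem_filter.mpr ⟨h, hne⟩
    · intro q hq hq'
      obtain ⟨h, hne⟩ := Finset.mem_filter.mp hq
      have : q.1 ∩ q.2 = ∅ := by
        by_contra hcon
        exact hq' (Finset.mem_filter.mpr ⟨h, hne, Finset.nonempty_iff_ne_empty.mpr hcon⟩)
      simp [this]

/-- The carré du champ concentrates around its mean. -/
lemma var_TI_sq (ℓ : ℕ) :
    Ex ℓ ((∑ i ∈ range ℓ, TI ℓ i ^ 2 - fun _ => 4 * ((Quads ℓ).card : ℝ)) ^ 2)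
      ≤ 270000 * (ℓ : ℝ) ^ 5 := by
  rw [sum_TI_sq, add_sub_cancel_left, Ex_sum_sq]
  · calc _ ≤ ∑ q ∈ Pairs ℓ, ∑ r ∈ Pairs ℓ,
          if symmDiff q.1 q.2 = symmDiff r.1 r.2 then (9 : ℝ) else 0 := by
          refine Finset.sum_le_sum fun q hq => Finset.sum_le_sum fun r hr => ?_
          split_ifs
          · have h1 : ((q.1 ∩ q.2).card : ℝ) ≤ 3 := by exact_mod_cast (Pairs_inter hq).2.2.2.1
            have h2 : ((r.1 ∩ r.2).card : ℝ) ≤ 3 := by exact_mod_cast (Pairs_inter hr).2.2.2.1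
            calc _ ≤ (3 : ℝ) * 3 := by gcongr
              _ = 9 := by norm_num
          · exact le_rfl
      _ = 9 * ((∑ q ∈ Pairs ℓ,
          ((Pairs ℓ).filter fun r => symmDiff q.1 q.2 = symmDiff r.1 r.2).card : ℕ) : ℝ) := by
          rw [Nat.cast_sum, Finset.mul_sum]
          refine Finset.sum_congr rfl fun q _ => ?_
          rw [← Finset.sum_filter, Finset.sum_const, nsmul_eq_mul]
          ring
      _ ≤ 9 * ((30000 * ℓ ^ 5 : ℕ) : ℝ) := by
          gcongr
          exact Pairs_energy ℓ
      _ = _ := by push_cast; ring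
  · intro q hq x hx
    obtain ⟨h1, h2, -⟩ := Pairs_inter hq
    rcases Finset.mem_symmDiff.mp hx with h | h
    exacts [Quads_subset h1 h.1, Quads_subset h2 h.1]

/-- `TT` at the scale of its standard deviation. -/
def tt (ℓ : ℕ) : (Fin ℓ → Bool) → ℝ := ((ℓ : ℝ) * √ℓ)⁻¹ • TT ℓ

/-- `TI` at the scale of its standard deviation. -/
def ti (ℓ i : ℕ) : (Fin ℓ → Bool) → ℝ := (ℓ : ℝ)⁻¹ • TI ℓ i

lemma Ex_smul_sq {ℓ : ℕ} (c : ℝ) (f : (Fin ℓ → Bool) → ℝ) :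
    Ex ℓ ((c • f) ^ 2) = c ^ 2 * Ex ℓ (f ^ 2) := by
  rw [smul_pow, map_smul, smul_eq_mul]

lemma scale_sq (ℓ : ℕ) : ((ℓ : ℝ) * √ℓ) ^ 2 = (ℓ : ℝ) ^ 3 := by
  rw [mul_pow, Real.sq_sqrt (Nat.cast_nonneg ℓ)]
  ring

lemma tt_sq_le {ℓ : ℕ} (hℓ : 0 < ℓ) : Ex ℓ (tt ℓ ^ 2) ≤ 3 := by
  have h0 : (0 : ℝ) < ℓ := by exact_mod_cast hℓ
  have h1 : ((Quads ℓ).card : ℝ) ≤ (ℓ : ℝ) ^ 3 := by exact_mod_cast Quads_card_le ℓ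
  unfold tt
  rw [Ex_smul_sq, TT_sq, inv_pow, scale_sq, inv_mul_le_iff₀ (by positivity)]
  have : (0 : ℝ) < (ℓ : ℝ) ^ 3 := by positivity
  linarith

lemma ti_sq_le {ℓ : ℕ} (hℓ : 0 < ℓ) (i : ℕ) : Ex ℓ (ti ℓ i ^ 2) ≤ 3 := by
  have h0 : (0 : ℝ) < ℓ := by exact_mod_cast hℓ
  unfold ti
  rw [Ex_smul_sq, inv_pow, inv_mul_le_iff₀ (by positivity)]
  have := TI_sq_le ℓ i
  linarith

/-- Gaussian integration by parts up to an error `O(ℓ ^ (-1/2))`: since `∑ TI = 4 TT`, flipping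
coordinate `i` in `E[TI · TT ^ (p + 1)]` and expanding to first order produces
`(p + 1) E[(∑ TI²) · TT ^ p]`, and `∑ TI²` is close to its mean. -/
lemma moment_rec (p : ℕ) : ∃ C : ℝ, ∀ ℓ : ℕ, 0 < ℓ →
    |Ex ℓ (tt ℓ ^ (p + 2)) - (p + 1) * ((Quads ℓ).card / (ℓ : ℝ) ^ 3) * Ex ℓ (tt ℓ ^ p)|
      ≤ C / √ℓ := by
  obtain ⟨K, hK, hT⟩ := pow_taylor p
  obtain ⟨C₁, hC₁, hM⟩ := moment_bound₂ 4 (p + 3) 3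
  obtain ⟨C₂, hC₂, hM2⟩ := moment_bound 4 (2 * p) 3
  refine ⟨(K * C₁ / 2 + (p + 1) * (270000 + C₂) / 2) / 4, fun ℓ hℓ => ?_⟩
  have h0 : (0 : ℝ) < ℓ := by exact_mod_cast hℓ
  have h1 : (1 : ℝ) ≤ ℓ := by exact_mod_cast hℓ
  set s := √(ℓ : ℝ) with hs
  have hs0 : 0 < s := Real.sqrt_pos.mpr h0
  have hs1 : 1 ≤ s := by rw [hs]; exact Real.one_le_sqrt.mpr h1
  have hss : s ^ 2 = ℓ := Real.sq_sqrt h0.le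
  have htm : tt ℓ ∈ V ℓ (range ℓ) 4 := Submodule.smul_mem _ _ (TT_mem ℓ)
  have him : ∀ i, ti ℓ i ∈ V ℓ (range ℓ) 4 := fun i => Submodule.smul_mem _ _ (TI_mem ℓ i)
  -- `v i` is the part of `tt` odd in coordinate `i`.
  set v : ℕ → (Fin ℓ → Bool) → ℝ := fun i => s⁻¹ • ti ℓ i with hv
  have hvT : ∀ i ε, v i ε = ((ℓ : ℝ) * s)⁻¹ * TI ℓ i ε := by
    intro i ε
    simp only [hv, ti, Pi.smul_apply, smul_eq_mul, mul_inv]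
    ring
  have htT : ∀ ε, tt ℓ ε = ((ℓ : ℝ) * s)⁻¹ * TT ℓ ε := fun ε => rfl
  have hsum : ∀ ε, ∑ i ∈ range ℓ, v i ε = 4 * tt ℓ ε := by
    intro ε
    simp only [hvT, htT, ← Finset.mul_sum, sum_TI]
    ring
  -- First-order expansion in each coordinate.
  have hstep : ∀ i ∈ range ℓ, |Ex ℓ (v i * tt ℓ ^ (p + 1)) - (p + 1) * Ex ℓ (v i ^ 2 * tt ℓ ^ p)|
      ≤ K * C₁ / 2 / s ^ 3 := by
    intro i hi
    have hi := Finset.mem_range.mp hi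
    have hflip : Ex ℓ (v i * tt ℓ ^ (p + 1))
        = Ex ℓ (-(v i * (tt ℓ - (2 : ℝ) • v i) ^ (p + 1))) := by
      rw [← Ex_flip ℓ i (v i * tt ℓ ^ (p + 1))]
      congr 1
      funext ε
      simp only [Pi.mul_apply, Pi.pow_apply, Pi.neg_apply, Pi.sub_apply, Pi.smul_apply,
        smul_eq_mul, hvT, htT, TI_flip hi, TT_flip hi]
      ring
    have hlin : Ex ℓ (v i * tt ℓ ^ (p + 1)) - (p + 1) * Ex ℓ (v i ^ 2 * tt ℓ ^ p)
        = Ex ℓ (((1 : ℝ) / 2) • (v i * tt ℓ ^ (p + 1) + -(v i * (tt ℓ - (2 : ℝ) • v i) ^ (p + 1)))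
          - ((p : ℝ) + 1) • (v i ^ 2 * tt ℓ ^ p)) := by
      rw [map_sub, map_smul, map_smul, map_add, ← hflip, smul_eq_mul, smul_eq_mul]
      ring
    rw [hlin]
    refine (Ex_abs_le _).trans ?_
    calc _ ≤ Ex ℓ ((K / 2 / s ^ 3) • fun ε => (1 + |tt ℓ ε| + |ti ℓ i ε|) ^ (p + 3)) := by
          refine Ex_mono fun ε => ?_
          simp only [Pi.mul_apply, Pi.pow_apply, Pi.neg_apply, Pi.sub_apply, Pi.smul_apply,
            Pi.add_apply, smul_eq_mul]
          set t := tt ℓ ε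
          set y := v i ε with hy
          set w := ti ℓ i ε with hw
          have hyw : y = s⁻¹ * w := rfl
          have habs : |y| = |w| / s := by
            rw [hyw, abs_mul, abs_of_pos (inv_pos.mpr hs0)]
            ring
          have hyle : |y| ≤ |w| := by
            rw [habs]
            exact div_le_self (abs_nonneg _) hs1
          have e : 1 / 2 * (y * t ^ (p + 1) + -(y * (t - 2 * y) ^ (p + 1)))
              - ((p : ℝ) + 1) * (y ^ 2 * t ^ p)
              = y / 2 * (t ^ (p + 1) - (t - 2 * y) ^ (p + 1) - 2 * (p + 1) * y * t ^ p) := by ring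
          rw [e, abs_mul, abs_div, abs_two]
          have hw3 : |w| ≤ 1 + |t| + |w| := by have := abs_nonneg t; linarith
          calc _ ≤ |y| / 2 * (K * y ^ 2 * (1 + |t| + |y|) ^ p) := by gcongr; exact hT t y
            _ = K / 2 * |y| ^ 3 * (1 + |t| + |y|) ^ p := by rw [← sq_abs y]; ring
            _ = K / 2 / s ^ 3 * (|w| ^ 3 * (1 + |t| + |y|) ^ p) := by rw [habs]; field_simp
            _ ≤ K / 2 / s ^ 3 * ((1 + |t| + |w|) ^ 3 * (1 + |t| + |w|) ^ p) := by gcongr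
            _ = _ := by rw [← pow_add, add_comm 3 p]
      _ ≤ K / 2 / s ^ 3 * C₁ := by
          rw [map_smul, smul_eq_mul]
          gcongr
          exact hM ℓ _ _ htm (him i) (tt_sq_le hℓ) (ti_sq_le hℓ i)
      _ = _ := by ring
  -- Replacing the carré du champ by its mean.
  set D : (Fin ℓ → Bool) → ℝ := ((ℓ : ℝ) ^ 3)⁻¹ •
    (∑ i ∈ range ℓ, TI ℓ i ^ 2 - fun _ => 4 * ((Quads ℓ).card : ℝ)) with hD
  have hDsq : Ex ℓ (D ^ 2) ≤ 270000 / ℓ := by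
    rw [hD, Ex_smul_sq]
    calc _ ≤ (((ℓ : ℝ) ^ 3)⁻¹) ^ 2 * (270000 * (ℓ : ℝ) ^ 5) := by gcongr; exact var_TI_sq ℓ
      _ = _ := by field_simp
  have hDt : |Ex ℓ (D * tt ℓ ^ p)| ≤ (270000 + C₂) / 2 / s := by
    refine (Ex_abs_le _).trans ?_
    calc _ ≤ Ex ℓ ((s / 2) • D ^ 2 + (1 / (2 * s)) • fun ε => |tt ℓ ε| ^ (2 * p)) := by
          refine Ex_mono fun ε => ?_
          simp only [Pi.mul_apply, Pi.pow_apply, Pi.smul_apply, Pi.add_apply, smul_eq_mul, abs_mul,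
            abs_pow, pow_mul']
          have := two_mul_le_add_sq (s * |D ε|) (|tt ℓ ε| ^ p)
          rw [← sq_abs (D ε)]
          rw [← sub_nonneg] at this ⊢
          have e : s / 2 * |D ε| ^ 2 + 1 / (2 * s) * (|tt ℓ ε| ^ p) ^ 2 - |D ε| * |tt ℓ ε| ^ p
            = ((s * |D ε|) ^ 2 + (|tt ℓ ε| ^ p) ^ 2 - 2 * (s * |D ε|) * |tt ℓ ε| ^ p) / (2 * s) := by
            field_simp
          rw [e]
          positivity
      _ ≤ s / 2 * (270000 / ℓ) + 1 / (2 * s) * C₂ := by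
          rw [map_add, map_smul, map_smul, smul_eq_mul, smul_eq_mul]
          gcongr
          exact hM2 ℓ _ htm (tt_sq_le hℓ)
      _ = _ := by
          rw [← hss]
          field_simp
  have hmain : Ex ℓ (tt ℓ ^ (p + 2)) - (p + 1) * ((Quads ℓ).card / (ℓ : ℝ) ^ 3) * Ex ℓ (tt ℓ ^ p)
      = (∑ i ∈ range ℓ, (Ex ℓ (v i * tt ℓ ^ (p + 1)) - (p + 1) * Ex ℓ (v i ^ 2 * tt ℓ ^ p))
        + (p + 1) * Ex ℓ (D * tt ℓ ^ p)) / 4 := by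
    have e1 : ∑ i ∈ range ℓ, Ex ℓ (v i * tt ℓ ^ (p + 1)) = 4 * Ex ℓ (tt ℓ ^ (p + 2)) := by
      rw [← map_sum, ← Finset.sum_mul, ← smul_eq_mul (4 : ℝ), ← map_smul]
      congr 1
      funext ε
      simp only [Pi.mul_apply, Pi.pow_apply, Pi.smul_apply, Finset.sum_apply, smul_eq_mul, hsum]
      ring
    have e2 : ∑ i ∈ range ℓ, Ex ℓ (v i ^ 2 * tt ℓ ^ p)
        = Ex ℓ (D * tt ℓ ^ p) + 4 * ((Quads ℓ).card / (ℓ : ℝ) ^ 3) * Ex ℓ (tt ℓ ^ p) := by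
      rw [← map_sum, ← Finset.sum_mul, ← smul_eq_mul (4 * _), ← map_smul, ← map_add]
      congr 1
      funext ε
      simp only [hD, Pi.mul_apply, Pi.pow_apply, Pi.smul_apply, Finset.sum_apply, smul_eq_mul,
        Pi.add_apply, Pi.sub_apply, hvT, mul_pow, ← Finset.mul_sum, inv_pow, hss]
      field_simp
      ring
    rw [Finset.sum_sub_distrib, ← Finset.mul_sum, e1, e2]
    ring
  rw [hmain, abs_div, abs_of_pos (a := (4 : ℝ)) (by norm_num)]
  have hA : |∑ i ∈ range ℓ, (Ex ℓ (v i * tt ℓ ^ (p + 1)) - (p + 1) * Ex ℓ (v i ^ 2 * tt ℓ ^ p))|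
      ≤ K * C₁ / 2 / s := by
    refine (Finset.abs_sum_le_sum_abs _ _).trans ((Finset.sum_le_card_nsmul _ _ _ hstep).trans ?_)
    rw [Finset.card_range, nsmul_eq_mul, ← hss]
    apply le_of_eq
    field_simp
  have hB : |((p : ℝ) + 1) * Ex ℓ (D * tt ℓ ^ p)| ≤ (p + 1) * ((270000 + C₂) / 2 / s) := by
    rw [abs_mul, abs_of_pos (a := (p : ℝ) + 1) (by positivity)]
    gcongr
  have hfin := (abs_add_le _ _).trans (add_le_add hA hB)
  calc _ ≤ (K * C₁ / 2 / s + (p + 1) * ((270000 + C₂) / 2 / s)) / 4 := by gcongr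
    _ = _ := by ring

/-! ### Walsh expansion of the sum of squared autocorrelations -/

/-- All pairs of nonzero shifts `s, u` with a starting point `j`. -/
def AllTri (ℓ : ℕ) : Finset (ℕ × ℕ × ℕ) :=
  (range ℓ ×ˢ range ℓ ×ˢ range ℓ).filter fun t => 1 ≤ t.2.1 ∧ 1 ≤ t.2.2 ∧ t.1 + t.2.1 + t.2.2 < ℓ

/-- The degenerate configurations `s = u`, recorded as `(j, s)`. -/
def DTri (ℓ : ℕ) : Finset (ℕ × ℕ) :=
  (range ℓ ×ˢ range ℓ).filter fun t => 1 ≤ t.2 ∧ t.1 + 2 * t.2 < ℓ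

/-- Reindexing by the shift `s = ℓ - m` and the distance `u = k - j` of two terms of the
autocorrelation at shift `s`. -/
lemma sum_AllTri (ℓ : ℕ) (F : ℕ → ℕ → ℕ → ℝ) :
    ∑ m ∈ range ℓ, ∑ k ∈ range m, ∑ j ∈ range k, F j (ℓ - m) (k - j)
      = ∑ t ∈ AllTri ℓ, F t.1 t.2.1 t.2.2 := by
  simp only [Finset.sum_sigma']
  refine Finset.sum_nbij' (fun x => (x.2.2, ℓ - x.1, x.2.1 - x.2.2))
    (fun t => ⟨ℓ - t.2.1, t.1 + t.2.2, t.1⟩) ?_ ?_ ?_ ?_ ?_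
  · rintro ⟨m, k, j⟩ h
    simp only [Finset.mem_sigma, Finset.mem_range, AllTri, Finset.mem_filter,
      Finset.mem_product] at h ⊢
    omega
  · rintro ⟨j, s, u⟩ h
    simp only [Finset.mem_sigma, Finset.mem_range, AllTri, Finset.mem_filter,
      Finset.mem_product] at h ⊢
    omega
  · rintro ⟨m, k, j⟩ h
    simp only [Finset.mem_sigma, Finset.mem_range] at h
    have h1 : ℓ - (ℓ - m) = m := by omega
    have h2 : j + (k - j) = k := by omega
    simp [h1, h2]
  · rintro ⟨j, s, u⟩ h
    simp only [Finset.mem_range, AllTri, Finset.mem_filter, Finset.mem_product] at h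
    have h1 : ℓ - (ℓ - s) = s := by omega
    simp [h1]
  · rintro ⟨m, k, j⟩ h
    rfl

/-- Splitting a sum symmetric in the two shifts according to `s < u`, `s = u`, `s > u`. -/
lemma sum_AllTri_symm (ℓ : ℕ) (F : ℕ → ℕ → ℕ → ℝ) (hF : ∀ j s u, F j s u = F j u s) :
    ∑ t ∈ AllTri ℓ, F t.1 t.2.1 t.2.2
      = 2 * ∑ t ∈ Tri ℓ, F t.1 t.2.1 t.2.2 + ∑ t ∈ DTri ℓ, F t.1 t.2 t.2 := by
  have h1 : (AllTri ℓ).filter (fun t => t.2.1 < t.2.2) = Tri ℓ := by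
    ext ⟨j, s, u⟩
    simp only [Finset.mem_range, AllTri, Tri, Finset.mem_filter, Finset.mem_product]
    omega
  have h2 : ∑ t ∈ ((AllTri ℓ).filter fun t => ¬ t.2.1 < t.2.2).filter (fun t => t.2.2 < t.2.1),
      F t.1 t.2.1 t.2.2 = ∑ t ∈ Tri ℓ, F t.1 t.2.1 t.2.2 := by
    refine Finset.sum_nbij' (fun t => (t.1, t.2.2, t.2.1)) (fun t => (t.1, t.2.2, t.2.1)) ?_ ?_
      (fun _ _ => rfl) (fun _ _ => rfl) (fun t _ => hF _ _ _)
    all_goals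
      rintro ⟨j, s, u⟩ h
      simp only [Finset.mem_range, AllTri, Tri, Finset.mem_filter, Finset.mem_product] at h ⊢
      omega
  have h3 : ∑ t ∈ ((AllTri ℓ).filter fun t => ¬ t.2.1 < t.2.2).filter (fun t => ¬ t.2.2 < t.2.1),
      F t.1 t.2.1 t.2.2 = ∑ t ∈ DTri ℓ, F t.1 t.2 t.2 := by
    refine Finset.sum_nbij' (fun t => (t.1, t.2.1)) (fun t => (t.1, t.2, t.2)) ?_ ?_ ?_ ?_ ?_
    · rintro ⟨j, s, u⟩ h
      simp only [Finset.mem_range, AllTri, DTri, Finset.mem_filter, Finset.mem_product] at h ⊢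
      omega
    · rintro ⟨j, s⟩ h
      simp only [Finset.mem_range, AllTri, DTri, Finset.mem_filter, Finset.mem_product] at h ⊢
      omega
    · rintro ⟨j, s, u⟩ h
      simp only [Finset.mem_filter] at h
      have : s = u := by omega
      simp [this]
    · rintro ⟨j, s⟩ h
      rfl
    · rintro ⟨j, s, u⟩ h
      simp only [Finset.mem_filter] at h
      have : s = u := by omega
      simp [this]
  rw [← Finset.sum_filter_add_sum_filter_not (AllTri ℓ) (fun t => t.2.1 < t.2.2), h1,
    ← Finset.sum_filter_add_sum_filter_not ((AllTri ℓ).filter fun t => ¬ t.2.1 < t.2.2)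
      (fun t => t.2.2 < t.2.1), h2, h3]
  ring

lemma DTri_card_le (ℓ : ℕ) : (DTri ℓ).card ≤ ℓ ^ 2 := by
  refine (Finset.card_filter_le _ _).trans (le_of_eq ?_)
  rw [Finset.card_product, Finset.card_range, pow_two]

lemma Quads_card_asymp (ℓ : ℕ) :
    |12 * ((Quads ℓ).card : ℝ) - (ℓ : ℝ) ^ 3| ≤ 11 * (ℓ : ℝ) ^ 2 := by
  have h1 := (sum_AllTri ℓ fun _ _ _ => 1).trans
    (sum_AllTri_symm ℓ (fun _ _ _ => 1) fun _ _ _ => rfl)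
  simp only [Finset.sum_const, Finset.card_range, nsmul_eq_mul, mul_one, ← Quads_card_eq] at h1
  have h2 : ∀ m : ℕ, ∑ k ∈ range m, (k : ℝ) = m * (m - 1) / 2 := by
    intro m
    induction m with
    | zero => simp
    | succ m ih =>
      rw [Finset.sum_range_succ, ih]
      push_cast
      ring
  have h3 : ∀ n : ℕ, ∑ m ∈ range n, ∑ k ∈ range m, (k : ℝ) = n * (n - 1) * (n - 2) / 6 := by
    intro n
    induction n with
    | zero => simp
    | succ n ih =>
      rw [Finset.sum_range_succ, ih, h2]
      push_cast
      ring
  rw [h3] at h1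
  have h4 : ((DTri ℓ).card : ℝ) ≤ (ℓ : ℝ) ^ 2 := by exact_mod_cast DTri_card_le ℓ
  have h5 : (0 : ℝ) ≤ (DTri ℓ).card := Nat.cast_nonneg _
  have h6 : (0 : ℝ) ≤ ℓ := Nat.cast_nonneg _
  have h7 : (ℓ : ℝ) ≤ (ℓ : ℝ) ^ 2 := by
    rcases Nat.eq_zero_or_pos ℓ with h | h
    · simp [h]
    · exact le_self_pow₀ (by exact_mod_cast h) (by norm_num)
  rw [abs_le]
  constructor <;> nlinarith

/-- The two-element sets carrying the degree-two part. -/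
def Dbl (ℓ : ℕ) : Finset (Finset ℕ) := (DTri ℓ).image fun t => {t.1, t.1 + 2 * t.2}

/-- The degree-two part of the sum of squared autocorrelations, up to a factor `4`. -/
def RR (ℓ : ℕ) : (Fin ℓ → Bool) → ℝ := ∑ A ∈ Dbl ℓ, W ℓ A

lemma Dbl_injOn (ℓ : ℕ) :
    Set.InjOn (fun t : ℕ × ℕ => ({t.1, t.1 + 2 * t.2} : Finset ℕ)) (DTri ℓ) := by
  rintro ⟨j, s⟩ h ⟨j', s'⟩ h' e
  have e' : ∀ x, x ∈ ({j, j + 2 * s} : Finset ℕ) ↔ x ∈ ({j', j' + 2 * s'} : Finset ℕ) :=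
    fun x => by
      dsimp only at e
      rw [e]
  simp only [Finset.mem_insert, Finset.mem_singleton] at e'
  have a1 := (e' j).1 (by simp)
  have a2 := (e' (j + 2 * s)).1 (by simp)
  have b1 := (e' j').2 (by simp)
  have b2 := (e' (j' + 2 * s')).2 (by simp)
  clear e e'
  have h1 : j = j' := by omega
  have h2 : s = s' := by omega
  rw [h1, h2]

lemma Dbl_subset {ℓ : ℕ} {A : Finset ℕ} (hA : A ∈ Dbl ℓ) : A ⊆ range ℓ := by
  obtain ⟨⟨j, s⟩, h, rfl⟩ := Finset.mem_image.mp hA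
  simp only [DTri, Finset.mem_filter] at h
  intro x hx
  simp only [Finset.mem_insert, Finset.mem_singleton] at hx
  rw [Finset.mem_range]
  omega

lemma RR_mem (ℓ : ℕ) : RR ℓ ∈ V ℓ (range ℓ) 4 := by
  refine Submodule.sum_mem _ fun A hA => W_mem_V (Dbl_subset hA) ?_
  obtain ⟨t, -, rfl⟩ := Finset.mem_image.mp hA
  exact Finset.card_le_two.trans (by norm_num)

lemma RR_sq (ℓ : ℕ) : Ex ℓ (RR ℓ ^ 2) ≤ (ℓ : ℝ) ^ 2 := by
  unfold RR
  rw [Ex_family_sq _ fun A => Dbl_subset]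
  exact_mod_cast Finset.card_image_le.trans (DTri_card_le ℓ)

lemma Ex_RR (ℓ : ℕ) : Ex ℓ (RR ℓ) = 0 := by
  unfold RR
  rw [map_sum]
  refine Finset.sum_eq_zero fun A hA => ?_
  rw [Ex_W (Dbl_subset hA), if_neg]
  rintro rfl
  obtain ⟨t, -, h⟩ := Finset.mem_image.mp hA
  exact Finset.insert_ne_empty _ _ h

lemma seqOf_cast {ℓ j : ℕ} (h : j < ℓ) (ε : Fin ℓ → Bool) :
    ((seqOf ℓ ε (j : ℤ) : ℤ) : ℝ) = sg ℓ j ε := by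
  have h1 : (0 : ℤ) ≤ (j : ℤ) ∧ (j : ℤ) < (ℓ : ℤ) := by omega
  unfold seqOf sg
  rw [dif_pos h1, dif_pos h]
  simp only [Int.toNat_natCast]
  split_ifs <;> norm_num

lemma seqOf_zero {ℓ : ℕ} {j : ℤ} (h : ¬ (0 ≤ j ∧ j < (ℓ : ℤ))) (ε : Fin ℓ → Bool) :
    seqOf ℓ ε j = 0 := by
  unfold seqOf
  rw [dif_neg h]

lemma autocorr_even (f : ℤ → ℤ) (s : ℤ) : autocorr f (-s) = autocorr f s := by
  unfold autocorr
  rw [← finsum_comp_equiv (Equiv.addRight s)]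
  refine finsum_congr fun j => ?_
  simp [mul_comm]

lemma autocorr_eq {ℓ m : ℕ} (hm : m ≤ ℓ) (ε : Fin ℓ → Bool) :
    ((autocorr (seqOf ℓ ε) ((ℓ - m : ℕ) : ℤ) : ℤ) : ℝ)
      = ∑ j ∈ range m, sg ℓ j ε * sg ℓ (j + (ℓ - m)) ε := by
  unfold autocorr
  rw [finsum_eq_sum_of_support_subset (s := (range m).map Nat.castEmbedding), Finset.sum_map,
    Int.cast_sum]
  · refine Finset.sum_congr rfl fun j hj => ?_
    have hj := Finset.mem_range.mp hj
    rw [Nat.castEmbedding_apply, Int.cast_mul, ← Nat.cast_add, seqOf_cast (by omega),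
      seqOf_cast (by omega), mul_comm]
  · intro j hj
    have hj' : seqOf ℓ ε (j + ((ℓ - m : ℕ) : ℤ)) * seqOf ℓ ε j ≠ 0 := hj
    have h1 : 0 ≤ j ∧ j < (ℓ : ℤ) := by
      by_contra hcon
      exact hj' (by rw [seqOf_zero hcon, mul_zero])
    have h2 : 0 ≤ j + ((ℓ - m : ℕ) : ℤ) ∧ j + ((ℓ - m : ℕ) : ℤ) < (ℓ : ℤ) := by
      by_contra hcon
      exact hj' (by rw [seqOf_zero hcon, zero_mul])
    rw [Finset.mem_coe, Finset.mem_map]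
    refine ⟨j.toNat, Finset.mem_range.mpr (by omega), ?_⟩
    rw [Nat.castEmbedding_apply]
    omega

lemma autocorr_zero_out {ℓ : ℕ} {s : ℤ} (hs : (ℓ : ℤ) < |s|) (ε : Fin ℓ → Bool) :
    autocorr (seqOf ℓ ε) s = 0 := by
  unfold autocorr
  refine finsum_eq_zero_of_forall_eq_zero fun j => ?_
  by_cases h : 0 ≤ j ∧ j < (ℓ : ℤ)
  · rw [seqOf_zero (j := j + s), zero_mul]
    rcases abs_cases s with h' | h' <;> omega
  · rw [seqOf_zero h, mul_zero]

lemma sq_sum_range (a : ℕ → ℝ) (m : ℕ) : (∑ j ∈ range m, a j) ^ 2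
    = ∑ j ∈ range m, a j ^ 2 + 2 * ∑ k ∈ range m, ∑ j ∈ range k, a j * a k := by
  induction m with
  | zero => simp
  | succ m ih =>
    rw [Finset.sum_range_succ, add_sq, ih, Finset.sum_range_succ, Finset.sum_range_succ,
      ← Finset.sum_mul]
    ring

lemma autocorr_zero {ℓ : ℕ} (ε : Fin ℓ → Bool) : ((autocorr (seqOf ℓ ε) 0 : ℤ) : ℝ) = ℓ := by
  have := autocorr_eq (le_refl ℓ) ε
  simpa [sg_sq] using this

lemma ssac_eq_sum {ℓ : ℕ} (ε : Fin ℓ → Bool) : ssac (seqOf ℓ ε)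
    = ∑ s ∈ Finset.Icc (-(ℓ : ℤ)) ℓ, ((autocorr (seqOf ℓ ε) s : ℤ) : ℝ) ^ 2 := by
  unfold ssac
  refine finsum_eq_sum_of_support_subset _ fun s hs => ?_
  rw [Finset.mem_coe, Finset.mem_Icc, ← abs_le]
  by_contra! h
  exact hs (by simp [autocorr_zero_out h])

/-- The Walsh expansion of the sum of squared autocorrelations. -/
lemma ssac_eq {ℓ : ℕ} (ε : Fin ℓ → Bool) :
    ssac (seqOf ℓ ε) = (2 * (ℓ : ℝ) ^ 2 - ℓ) + 8 * TT ℓ ε + 4 * RR ℓ ε := by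
  have heven : Function.Even fun s : ℤ => ((autocorr (seqOf ℓ ε) s : ℤ) : ℝ) ^ 2 := by
    intro s
    simp only [autocorr_even]
  rw [ssac_eq_sum, Finset.sum_Icc_of_even_eq_range heven, Finset.sum_range_succ',
    ← Finset.sum_range_reflect]
  obtain ⟨F, hF⟩ : ∃ F : ℕ → ℕ → ℕ → ℝ, ∀ j s u, F j s u
      = sg ℓ j ε * sg ℓ (j + s) ε * (sg ℓ (j + u) ε * sg ℓ (j + s + u) ε) :=
    ⟨_, fun _ _ _ => rfl⟩
  have h1 : ∀ m ∈ range ℓ, ((autocorr (seqOf ℓ ε) ((ℓ - 1 - m + 1 : ℕ) : ℤ) : ℤ) : ℝ) ^ 2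
      = m + 2 * ∑ k ∈ range m, ∑ j ∈ range k, F j (ℓ - m) (k - j) := by
    intro m hm
    have hm := Finset.mem_range.mp hm
    have e : ℓ - 1 - m + 1 = ℓ - m := by omega
    rw [e, autocorr_eq hm.le, sq_sum_range]
    congr 1
    · have : ∀ j ∈ range m, (sg ℓ j ε * sg ℓ (j + (ℓ - m)) ε) ^ 2 = 1 := by
        intro j _
        rw [mul_pow, pow_two, pow_two, sg_sq, sg_sq, one_mul]
      rw [Finset.sum_congr rfl this]
      simp
    · congr 1
      refine Finset.sum_congr rfl fun k _ => Finset.sum_congr rfl fun j hj => ?_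
      have hj := Finset.mem_range.mp hj
      have e1 : j + (k - j) = k := by omega
      have e2 : j + (ℓ - m) + (k - j) = k + (ℓ - m) := by omega
      simp only [hF, e1, e2]
  have hgauss : ∑ m ∈ range ℓ, (m : ℝ) = ℓ * (ℓ - 1) / 2 := by
    clear h1 heven hF ε
    induction ℓ with
    | zero => simp
    | succ n ih =>
      rw [Finset.sum_range_succ, ih]
      push_cast
      ring
  have hT : ∑ t ∈ Tri ℓ, F t.1 t.2.1 t.2.2 = TT ℓ ε := by
    simp only [hF]
    unfold TT Quads
    rw [Finset.sum_image (quad_injOn ℓ), Finset.sum_apply]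
    refine Finset.sum_congr rfl ?_
    rintro ⟨j, s, u⟩ h
    simp only [Tri, Finset.mem_filter] at h
    unfold W quad
    rw [Finset.prod_insert, Finset.prod_insert, Finset.prod_insert, Finset.prod_singleton]
    · ring
    all_goals
      simp only [Finset.mem_insert, Finset.mem_singleton]
      omega
  have hR : ∑ t ∈ DTri ℓ, F t.1 t.2 t.2 = RR ℓ ε := by
    simp only [hF]
    unfold RR Dbl
    rw [Finset.sum_image (Dbl_injOn ℓ), Finset.sum_apply]
    refine Finset.sum_congr rfl ?_
    rintro ⟨j, s⟩ h
    simp only [DTri, Finset.mem_filter] at h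
    unfold W
    rw [Finset.prod_insert, Finset.prod_singleton]
    · dsimp only
      have e : j + s + s = j + 2 * s := by ring
      rw [e]
      linear_combination sg ℓ j ε * sg ℓ (j + 2 * s) ε * sg_sq ℓ (j + s) ε
    · simp only [Finset.mem_singleton]
      omega
  rw [Finset.sum_congr rfl h1, Finset.sum_add_distrib, ← Finset.mul_sum, sum_AllTri,
    sum_AllTri_symm, hgauss, hT, hR]
  · have := autocorr_zero ε
    simp only [Nat.cast_zero, this, nsmul_eq_mul]
    push_cast
    ring
  · intro j s u
    have e : j + s + u = j + u + s := by ring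
    rw [hF, hF, e]
    ring

lemma ADF_eq {ℓ : ℕ} (ε : Fin ℓ → Bool) :
    ADF (seqOf ℓ ε) = (ssac (seqOf ℓ ε) - (ℓ : ℝ) ^ 2) / (ℓ : ℝ) ^ 2 := by
  unfold ADF
  rw [autocorr_zero]
  congr 1
  rw [ssac_eq_sum, finsum_mem_eq_sum_of_inter_support_eq (t := (Finset.Icc (-(ℓ : ℤ)) ℓ).erase 0)]
  · rw [← Finset.add_sum_erase (Finset.Icc (-(ℓ : ℤ)) ℓ) _ (a := 0) (by simp), autocorr_zero]
    ring
  · ext s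
    simp only [Set.mem_inter_iff, Finset.coe_erase, Finset.coe_Icc, Set.mem_sdiff, Set.mem_Icc,
      Set.mem_singleton_iff, Function.mem_support, ne_eq, Set.mem_ofPred_eq]
    constructor
    · rintro ⟨h0, hs⟩
      refine ⟨⟨?_, h0⟩, hs⟩
      rw [← abs_le]
      by_contra! h
      exact hs (by simp [autocorr_zero_out h])
    · rintro ⟨⟨-, h0⟩, hs⟩
      exact ⟨h0, hs⟩

/-! ### The limit of the central moments -/

lemma tendsto_const_div_sqrt (C : ℝ) : Tendsto (fun ℓ : ℕ => C / √(ℓ : ℝ)) atTop (nhds 0) :=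
  (Real.tendsto_sqrt_atTop.comp tendsto_natCast_atTop_atTop).const_div_atTop C

lemma Quads_card_tendsto :
    Tendsto (fun ℓ : ℕ => ((Quads ℓ).card : ℝ) / (ℓ : ℝ) ^ 3) atTop (nhds (1 / 12)) := by
  rw [tendsto_iff_dist_tendsto_zero]
  refine squeeze_zero' (Eventually.of_forall fun _ => dist_nonneg) ?_
    ((tendsto_natCast_atTop_atTop (R := ℝ)).const_div_atTop (11 / 12))
  filter_upwards [eventually_gt_atTop 0] with ℓ hℓ
  have h0 : (0 : ℝ) < ℓ := by exact_mod_cast hℓ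
  have h := Quads_card_asymp ℓ
  rw [Real.dist_eq]
  have e : ((Quads ℓ).card : ℝ) / (ℓ : ℝ) ^ 3 - 1 / 12
      = (12 * ((Quads ℓ).card : ℝ) - (ℓ : ℝ) ^ 3) / (12 * (ℓ : ℝ) ^ 3) := by
    field_simp
  rw [e, abs_div, abs_of_pos (by positivity : (0 : ℝ) < 12 * (ℓ : ℝ) ^ 3),
    div_le_div_iff₀ (by positivity) h0]
  nlinarith [mul_le_mul_of_nonneg_right h h0.le]

/-- The `p`-th moment of a centred Gaussian of variance `v`. -/
def gaussMoment (v : ℝ) (p : ℕ) : ℝ :=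
  if Even p then (Nat.doubleFactorial (p - 1) : ℝ) * v ^ (p / 2) else 0

lemma gaussMoment_add_two (v : ℝ) (p : ℕ) :
    gaussMoment v (p + 2) = (p + 1) * v * gaussMoment v p := by
  unfold gaussMoment
  have h : Even (p + 2) ↔ Even p := by simp [Nat.even_add]
  rw [if_congr h rfl rfl]
  split_ifs
  · have e : (p + 2) / 2 = p / 2 + 1 := by omega
    rw [e, pow_succ]
    cases p with
    | zero => simp
    | succ n =>
      have e2 : n + 1 + 2 - 1 = n + 2 := by omega
      have e3 : n + 1 - 1 = n := by omega
      rw [e2, e3, Nat.doubleFactorial_add_two]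
      push_cast
      ring
  · simp

lemma mul_gaussMoment (c v : ℝ) (p : ℕ) : c ^ p * gaussMoment v p = gaussMoment (c ^ 2 * v) p := by
  unfold gaussMoment
  split_ifs with h
  · obtain ⟨k, rfl⟩ := h
    have e : (k + k) / 2 = k := by omega
    rw [e, mul_pow, ← pow_mul, ← two_mul]
    ring
  · simp

/-- The method of moments for the quartic part: the recursion `moment_rec` is that of a
centred Gaussian of variance `1 / 12` up to an error tending to zero. -/
lemma tt_moment_tendsto (p : ℕ) :
    Tendsto (fun ℓ : ℕ => Ex ℓ (tt ℓ ^ p)) atTop (nhds (gaussMoment (1 / 12) p)) := by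
  induction p using Nat.twoStepInduction with
  | zero =>
    have h : ∀ ℓ : ℕ, Ex ℓ (tt ℓ ^ 0) = 1 := fun ℓ => Ex_const ℓ 1
    have hg : gaussMoment (1 / 12) 0 = 1 := by simp [gaussMoment]
    simp_rw [h, hg]
    exact tendsto_const_nhds
  | one =>
    have h : ∀ ℓ : ℕ, Ex ℓ (tt ℓ ^ 1) = 0 := fun ℓ => by
      rw [pow_one]
      unfold tt
      rw [map_smul, Ex_TT, smul_zero]
    have hg : gaussMoment (1 / 12) 1 = 0 := by simp [gaussMoment]
    simp_rw [h, hg]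
    exact tendsto_const_nhds
  | more p ih _ =>
    obtain ⟨C, hC⟩ := moment_rec p
    have h1 : Tendsto (fun ℓ : ℕ => ((p : ℝ) + 1) * ((Quads ℓ).card / (ℓ : ℝ) ^ 3)
        * Ex ℓ (tt ℓ ^ p)) atTop (nhds (gaussMoment (1 / 12) (p + 2))) := by
      rw [gaussMoment_add_two]
      exact (Quads_card_tendsto.const_mul _).mul ih
    have h2 : Tendsto (fun ℓ : ℕ => Ex ℓ (tt ℓ ^ (p + 2))
        - ((p : ℝ) + 1) * ((Quads ℓ).card / (ℓ : ℝ) ^ 3) * Ex ℓ (tt ℓ ^ p)) atTop (nhds 0) := by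
      refine squeeze_zero_norm' ?_ (tendsto_const_div_sqrt C)
      filter_upwards [eventually_gt_atTop 0] with ℓ hℓ
      exact hC ℓ hℓ
    simpa using h2.add h1

/-- The centred and rescaled sum of squared autocorrelations. -/
def cs (ℓ : ℕ) : (Fin ℓ → Bool) → ℝ := (8 : ℝ) • tt ℓ + (4 : ℝ) • (((ℓ : ℝ) * √ℓ)⁻¹ • RR ℓ)

/-- Adding the quadratic part, which has variance `O(1 / ℓ)`, does not change the moments in
the limit. -/
lemma cs_moment_bound (p : ℕ) : ∃ C, ∀ ℓ : ℕ, 0 < ℓ →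
    |Ex ℓ (cs ℓ ^ p) - Ex ℓ (((8 : ℝ) • tt ℓ) ^ p)| ≤ C / √(ℓ : ℝ) := by
  obtain ⟨K, hK0, hK⟩ := pow_perturb p
  obtain ⟨C, hC0, hC⟩ := moment_bound₂ 4 (p * 2) 192
  refine ⟨K * ((16 + C) / 2), fun ℓ hℓ => ?_⟩
  have h0 : (0 : ℝ) < ℓ := by exact_mod_cast hℓ
  have hs : 0 < √(ℓ : ℝ) := Real.sqrt_pos.mpr h0
  have hss : √(ℓ : ℝ) ^ 2 = ℓ := Real.sq_sqrt h0.le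
  have h1 : (1 : ℝ) ≤ ℓ := by exact_mod_cast hℓ
  set a := (8 : ℝ) • tt ℓ with ha
  set r := (4 : ℝ) • (((ℓ : ℝ) * √ℓ)⁻¹ • RR ℓ) with hr
  have ha2 : Ex ℓ (a ^ 2) ≤ 192 := by
    rw [ha, Ex_smul_sq]
    linarith [tt_sq_le hℓ]
  have hr2 : Ex ℓ (r ^ 2) ≤ 16 / ℓ := by
    rw [hr, Ex_smul_sq, Ex_smul_sq, inv_pow, scale_sq]
    have h2 : ((ℓ : ℝ) ^ 3)⁻¹ * Ex ℓ (RR ℓ ^ 2) ≤ ((ℓ : ℝ) ^ 3)⁻¹ * (ℓ : ℝ) ^ 2 := by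
      gcongr
      exact RR_sq ℓ
    have h3 : ((ℓ : ℝ) ^ 3)⁻¹ * (ℓ : ℝ) ^ 2 = 1 / ℓ := by field_simp
    calc _ ≤ (4 : ℝ) ^ 2 * (1 / ℓ) := by linarith
      _ = 16 / ℓ := by ring
  have hr3 : Ex ℓ (r ^ 2) ≤ 192 := by
    refine hr2.trans ?_
    rw [div_le_iff₀ h0]
    linarith
  have haV : a ∈ V ℓ (range ℓ) 4 :=
    Submodule.smul_mem _ _ (Submodule.smul_mem _ _ (TT_mem ℓ))
  have hrV : r ∈ V ℓ (range ℓ) 4 :=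
    Submodule.smul_mem _ _ (Submodule.smul_mem _ _ (RR_mem ℓ))
  have hM := hC ℓ a r haV hrV ha2 hr3
  -- weighted AM-GM, with weight `√ℓ` balancing the variance `O(1 / ℓ)` of `r`
  have key : ∀ ε, |(cs ℓ ^ p - a ^ p) ε|
      ≤ ((K * √(ℓ : ℝ) / 2) • r ^ 2
        + (K / √(ℓ : ℝ) / 2) • fun ε => (1 + |a ε| + |r ε|) ^ (p * 2)) ε := by
    intro ε
    refine (hK (a ε) (r ε)).trans ?_
    simp only [Pi.add_apply, Pi.smul_apply, Pi.pow_apply, smul_eq_mul, pow_mul]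
    rw [← sq_abs (r ε)]
    generalize (1 + |a ε| + |r ε|) ^ p = M
    generalize |r ε| = X
    have h2 : K * √(ℓ : ℝ) / 2 * X ^ 2 + K / √(ℓ : ℝ) / 2 * M ^ 2 - K * X * M
        = K / √(ℓ : ℝ) / 2 * (√(ℓ : ℝ) * X - M) ^ 2 := by
      field_simp
      ring
    have h3 : 0 ≤ K / √(ℓ : ℝ) / 2 * (√(ℓ : ℝ) * X - M) ^ 2 := by positivity
    linarith
  rw [← map_sub]
  refine (Ex_abs_le _).trans ((Ex_mono key).trans ?_)
  rw [map_add, map_smul, map_smul, smul_eq_mul, smul_eq_mul]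
  have h2 : K * √(ℓ : ℝ) / 2 * Ex ℓ (r ^ 2) ≤ K * √(ℓ : ℝ) / 2 * (16 / ℓ) := by gcongr
  have h3 : K / √(ℓ : ℝ) / 2 * Ex ℓ (fun ε => (1 + |a ε| + |r ε|) ^ (p * 2))
      ≤ K / √(ℓ : ℝ) / 2 * C := by gcongr
  refine (add_le_add h2 h3).trans (le_of_eq ?_)
  rw [show (16 : ℝ) / ℓ = 16 / √(ℓ : ℝ) ^ 2 by rw [hss]]
  field_simp

lemma cs_moment_tendsto (p : ℕ) :
    Tendsto (fun ℓ : ℕ => Ex ℓ (cs ℓ ^ p)) atTop (nhds (gaussMoment (16 / 3) p)) := by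
  obtain ⟨C, hC⟩ := cs_moment_bound p
  have h1 : Tendsto (fun ℓ : ℕ => Ex ℓ (((8 : ℝ) • tt ℓ) ^ p)) atTop
      (nhds (gaussMoment (16 / 3) p)) := by
    have e : gaussMoment (16 / 3) p = 8 ^ p * gaussMoment (1 / 12) p := by
      rw [mul_gaussMoment]
      norm_num
    simp_rw [smul_pow, map_smul, smul_eq_mul, e]
    exact (tt_moment_tendsto p).const_mul _
  have h2 : Tendsto (fun ℓ : ℕ => Ex ℓ (cs ℓ ^ p) - Ex ℓ (((8 : ℝ) • tt ℓ) ^ p)) atTop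
      (nhds 0) := by
    refine squeeze_zero_norm' ?_ (tendsto_const_div_sqrt C)
    filter_upwards [eventually_gt_atTop 0] with ℓ hℓ
    exact hC ℓ hℓ
  simpa using h2.add h1

lemma expect_eq (ℓ : ℕ) (v : (ℤ → ℤ) → ℝ) : expect ℓ v = Ex ℓ fun ε => v (seqOf ℓ ε) := by
  rw [Ex_apply]
  rfl

lemma expect_ssac (ℓ : ℕ) : expect ℓ ssac = 2 * (ℓ : ℝ) ^ 2 - ℓ := by
  have e : (fun ε => ssac (seqOf ℓ ε))
      = (fun _ => 2 * (ℓ : ℝ) ^ 2 - ℓ) + (8 : ℝ) • TT ℓ + (4 : ℝ) • RR ℓ := by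
    funext ε
    exact ssac_eq ε
  rw [expect_eq, e, map_add, map_add, map_smul, map_smul, Ex_const, Ex_TT, Ex_RR]
  simp

lemma centralMoment_ssac {ℓ : ℕ} (hℓ : 0 < ℓ) (p : ℕ) :
    centralMoment p ℓ ssac = ((ℓ : ℝ) * √ℓ) ^ p * Ex ℓ (cs ℓ ^ p) := by
  have h0 : (0 : ℝ) < ℓ := by exact_mod_cast hℓ
  have hs : 0 < √(ℓ : ℝ) := Real.sqrt_pos.mpr h0
  unfold centralMoment
  rw [expect_ssac, expect_eq]
  refine Eq.trans ?_ (map_smul (Ex ℓ) (((ℓ : ℝ) * √ℓ) ^ p) (cs ℓ ^ p))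
  rw [← smul_pow]
  congr 1
  funext ε
  simp only [ssac_eq, cs, tt, Pi.pow_apply, Pi.add_apply, Pi.smul_apply, smul_eq_mul]
  congr 1
  field_simp
  ring

/-- The demerit factor is an affine function of the sum of squares. -/
lemma centralMoment_ADF {ℓ : ℕ} (hℓ : 0 < ℓ) (p : ℕ) :
    centralMoment p ℓ ADF = centralMoment p ℓ ssac / ((ℓ : ℝ) ^ 2) ^ p := by
  have h0 : (0 : ℝ) < ℓ := by exact_mod_cast hℓ
  have e : (fun ε => ADF (seqOf ℓ ε)) = ((ℓ : ℝ) ^ 2)⁻¹ • (fun ε => ssac (seqOf ℓ ε))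
      + fun _ => (-1 : ℝ) := by
    funext ε
    simp only [ADF_eq, Pi.add_apply, Pi.smul_apply, smul_eq_mul]
    field_simp
    ring
  have hE : expect ℓ ADF = ((ℓ : ℝ) ^ 2)⁻¹ * expect ℓ ssac - 1 := by
    rw [expect_eq, expect_eq, e, map_add, map_smul, Ex_const, smul_eq_mul]
    ring
  unfold centralMoment
  rw [hE]
  generalize expect ℓ ssac = m
  rw [expect_eq, expect_eq, div_eq_inv_mul, ← inv_pow ((ℓ : ℝ) ^ 2) p]
  refine Eq.trans ?_ (map_smul (Ex ℓ) ((((ℓ : ℝ) ^ 2)⁻¹) ^ p) _)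
  congr 1
  funext ε
  simp only [Pi.smul_apply, smul_eq_mul]
  rw [← mul_pow, congrFun e ε]
  congr 1
  simp only [Pi.add_apply, Pi.smul_apply, smul_eq_mul]
  ring

lemma rpow_half (ℓ p : ℕ) : (ℓ : ℝ) ^ ((p : ℝ) / 2) = √(ℓ : ℝ) ^ p := by
  rw [Real.sqrt_eq_rpow, ← Real.rpow_natCast, ← Real.rpow_mul (Nat.cast_nonneg ℓ)]
  ring_nf

lemma rpow_three_half {ℓ : ℕ} (hℓ : 0 < ℓ) (p : ℕ) :
    (ℓ : ℝ) ^ ((3 * (p : ℝ)) / 2) = ((ℓ : ℝ) * √ℓ) ^ p := by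
  have h0 : (0 : ℝ) < ℓ := by exact_mod_cast hℓ
  rw [mul_pow, ← rpow_half, ← Real.rpow_natCast, ← Real.rpow_add h0]
  ring_nf

lemma ssac_moment_tendsto (p : ℕ) :
    Tendsto (fun ℓ : ℕ => centralMoment p ℓ ssac / (ℓ : ℝ) ^ ((3 * (p : ℝ)) / 2))
      atTop (nhds (gaussMoment (16 / 3) p)) := by
  refine (cs_moment_tendsto p).congr' ?_
  filter_upwards [eventually_gt_atTop 0] with ℓ hℓ
  have h0 : (0 : ℝ) < ℓ := by exact_mod_cast hℓ
  have hs : 0 < √(ℓ : ℝ) := Real.sqrt_pos.mpr h0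
  rw [centralMoment_ssac hℓ, rpow_three_half hℓ, mul_div_cancel_left₀]
  positivity

lemma ADF_moment_tendsto (p : ℕ) :
    Tendsto (fun ℓ : ℕ => (ℓ : ℝ) ^ ((p : ℝ) / 2) * centralMoment p ℓ ADF)
      atTop (nhds (gaussMoment (16 / 3) p)) := by
  refine (cs_moment_tendsto p).congr' ?_
  filter_upwards [eventually_gt_atTop 0] with ℓ hℓ
  have h0 : (0 : ℝ) < ℓ := by exact_mod_cast hℓ
  have hs : 0 < √(ℓ : ℝ) := Real.sqrt_pos.mpr h0
  have e : ((ℓ : ℝ) ^ 2) ^ p = √(ℓ : ℝ) ^ p * ((ℓ : ℝ) * √ℓ) ^ p := by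
    rw [← mul_pow]
    congr 1
    linear_combination -(ℓ : ℝ) * Real.sq_sqrt h0.le
  rw [centralMoment_ADF hℓ, centralMoment_ssac hℓ, rpow_half, e]
  field_simp

/-- Asymptotics of the `p`-th central moments of `ssac` and of the demerit
factor: `μ_p[ssac]/ℓ^(3p/2)` and `ℓ^(p/2)·μ_p[ADF]` tend to `0` for odd `p` and
to `(p-1)‼·(16/3)^(p/2)` for even `p`. -/
theorem central_moment_asymptotics (p : ℕ) :
    (Odd p →
      Tendsto (fun ℓ : ℕ => centralMoment p ℓ ssac / (ℓ : ℝ) ^ ((3 * (p : ℝ)) / 2))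
        atTop (nhds 0)) ∧
    (Even p →
      Tendsto (fun ℓ : ℕ => centralMoment p ℓ ssac / (ℓ : ℝ) ^ ((3 * (p : ℝ)) / 2))
        atTop (nhds ((Nat.doubleFactorial (p - 1) : ℝ) * (16 / 3) ^ (p / 2)))) ∧
    (Odd p →
      Tendsto (fun ℓ : ℕ => (ℓ : ℝ) ^ ((p : ℝ) / 2) * centralMoment p ℓ ADF)
        atTop (nhds 0)) ∧
    (Even p →
      Tendsto (fun ℓ : ℕ => (ℓ : ℝ) ^ ((p : ℝ) / 2) * centralMoment p ℓ ADF)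
        atTop (nhds ((Nat.doubleFactorial (p - 1) : ℝ) * (16 / 3) ^ (p / 2)))) := by
  have hodd : Odd p → gaussMoment (16 / 3) p = 0 := fun h =>
    if_neg (Nat.not_even_iff_odd.mpr h)
  have heven : Even p → gaussMoment (16 / 3) p
      = (Nat.doubleFactorial (p - 1) : ℝ) * (16 / 3) ^ (p / 2) := fun h => if_pos h
  refine ⟨fun h => ?_, fun h => ?_, fun h => ?_, fun h => ?_⟩
  · rw [← hodd h]
    exact ssac_moment_tendsto p
  · rw [← heven h]
    exact ssac_moment_tendsto p
  · rw [← hodd h]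
    exact ADF_moment_tendsto p
  · rw [← heven h]
    exact ADF_moment_tendsto p
end
end
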